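/- arXiv:1007.1575 — 5 statements merged into one kernel-verified Lean document; each statement's English description precedes it below -/
import Mathlib

section
/- Let P, Q1, Q2 be orthogonal projections on H with ‖P − Q1‖ < 1 and ‖P − Q2‖ < 1, with angular operators X1, X2 for P such that Ran Q1 = G(X1) and Ran Q2 = G(X2). Let U1 = (P + X1)(I + X1*X1)^{-1/2} P + (P⊥ − X1*)(I + X1 X1*)^{-1/2} P⊥ and Q := U1* Q2 U1. Assume that Ran Q = G(Z) for some angular operator Z for P, and that the operator I + X2*X1 maps Ran P onto Ran P. Then X2 − X1 = (I + X1 X1*)^{1/2} Z (I + X1*X1)^{-1/2} (I + X1*X2). -/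
open ContinuousLinearMap

/-- `P` is an orthogonal projection: `P = P* = P²`. -/
def IsOrthogonalProjection {H : Type*} [NormedAddCommGroup H] [InnerProductSpace ℂ H]
    [CompleteSpace H] (P : H →L[ℂ] H) : Prop :=
  IsSelfAdjoint P ∧ P * P = P

/-- `X` is an angular operator for the orthogonal projection `P`: `X = P⊥ X P`. -/
def IsAngularOperator {H : Type*} [NormedAddCommGroup H] [InnerProductSpace ℂ H]
    [CompleteSpace H] (P X : H →L[ℂ] H) : Prop :=
  X = (1 - P) * X * P

/-- `Ran Q` is the graph subspace `G(X) = {u + X u : u ∈ Ran P}`. -/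
def HasGraphRange {H : Type*} [NormedAddCommGroup H] [InnerProductSpace ℂ H]
    [CompleteSpace H] (P X Q : H →L[ℂ] H) : Prop :=
  Set.range ⇑Q = (fun u => u + X u) '' Set.range ⇑P

/-- The unitary operator
`U₁ = (P + X₁)(I + X₁*X₁)^{-1/2} P + (P⊥ − X₁*)(I + X₁X₁*)^{-1/2} P⊥`. -/
noncomputable def angularUnitary {H : Type*} [NormedAddCommGroup H] [InnerProductSpace ℂ H]
    [CompleteSpace H] (P X₁ : H →L[ℂ] H) : H →L[ℂ] H :=
  (P + X₁) * Ring.inverse (CFC.sqrt (1 + adjoint X₁ * X₁)) * P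
    + ((1 - P) - adjoint X₁) * Ring.inverse (CFC.sqrt (1 + X₁ * adjoint X₁)) * (1 - P)

theorem aux_UV {R : Type*} [Ring R] (p x y s t si ti : R)
    (hpp : p * p = p) (hpx : p * x = 0) (hxp : x * p = x) (hyp : y * p = 0) (hpy : p * y = y)
    (hs1 : s * si = 1) (hs2 : si * s = 1) (ht1 : t * ti = 1) (ht2 : ti * t = 1)
    (hss : s * s = 1 + y * x) (htt : t * t = 1 + x * y)
    (hsp : si * p = p * si) (htp : ti * p = p * ti) :
    ((p + x) * si * p + ((1 - p) - y) * ti * (1 - p)) *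
      (p * si * (p + y) + (1 - p) * ti * ((1 - p) - x)) = 1 := by
  have hA1 : si * si * (1 + y * x) = 1 := by
    rw [← hss, mul_assoc, ← mul_assoc si s s, hs2, one_mul, hs2]
  have hA2 : (1 + y * x) * (si * si) = 1 := by
    rw [← hss, mul_assoc, ← mul_assoc s si si, hs1, one_mul, hs1]
  have hB1 : ti * ti * (1 + x * y) = 1 := by
    rw [← htt, mul_assoc, ← mul_assoc ti t t, ht2, one_mul, ht2]
  have hB2 : (1 + x * y) * (ti * ti) = 1 := by
    rw [← htt, mul_assoc, ← mul_assoc t ti ti, ht1, one_mul, ht1]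
  have hAp : (si * si) * p = p * (si * si) := by
    rw [mul_assoc, hsp, ← mul_assoc, hsp, mul_assoc]
  have hBp : (ti * ti) * p = p * (ti * ti) := by
    rw [mul_assoc, htp, ← mul_assoc, htp, mul_assoc]
  have e1 : (p + x) * si * p * (p * si * (p + y)) = (p + x) * (si * si) * (p + y) := by
    have h : (p + x) * p = p + x := by rw [add_mul, hpp, hxp]
    calc _ = (p + x) * (si * (p * p) * si) * (p + y) := by noncomm_ring
      _ = (p + x) * p * (si * si) * (p + y) := by rw [hpp, hsp]; noncomm_ring
      _ = _ := by rw [h]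
  have e2 : (1 - p - y) * ti * (1 - p) * ((1 - p) * ti * (1 - p - x))
      = (1 - p - y) * (ti * ti) * (1 - p - x) := by
    have h : (1 - p - y) * (1 - p) = 1 - p - y := by
      simp only [sub_mul, mul_sub, one_mul, mul_one, hpp, hyp]; abel
    have h2 : (1 - p) * (1 - p) = 1 - p := by
      simp only [sub_mul, mul_sub, one_mul, mul_one, hpp]; abel
    have h3 : ti * (1 - p) = (1 - p) * ti := by rw [mul_sub, sub_mul, htp]; simp
    calc _ = (1 - p - y) * (ti * ((1 - p) * (1 - p)) * ti) * (1 - p - x) := by noncomm_ring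
      _ = (1 - p - y) * (1 - p) * (ti * ti) * (1 - p - x) := by rw [h2, h3]; noncomm_ring
      _ = _ := by rw [h]
  have z1 : p * (1 - p) = 0 := by rw [mul_sub, mul_one, hpp, sub_self]
  have z2 : (1 - p) * p = 0 := by rw [sub_mul, one_mul, hpp, sub_self]
  have e3 : (p + x) * si * p * ((1 - p) * ti * (1 - p - x)) = 0 := by
    calc _ = (p + x) * si * (p * (1 - p)) * ti * (1 - p - x) := by simp only [mul_assoc]
      _ = 0 := by rw [z1]; simp
  have e4 : (1 - p - y) * ti * (1 - p) * (p * si * (p + y)) = 0 := by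
    calc _ = (1 - p - y) * ti * ((1 - p) * p) * si * (p + y) := by simp only [mul_assoc]
      _ = 0 := by rw [z2]; simp
  have dist : ∀ a b c d : R, (a + b) * (c + d) = a * c + a * d + (b * c + b * d) := by
    intros; noncomm_ring
  rw [dist, e1, e2, e3, e4]
  generalize si * si = A at *
  generalize ti * ti = B at *
  have hxA : x * A = B * x := by
    calc x * A = (B * (1 + x * y)) * (x * A) := by rw [hB1, one_mul]
      _ = B * x * ((1 + y * x) * A) := by noncomm_ring
      _ = B * x := by rw [hA2, mul_one]
  have hyB : y * B = A * y := by
    calc y * B = (A * (1 + y * x)) * (y * B) := by rw [hA1, one_mul]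
      _ = A * y * ((1 + x * y) * B) := by noncomm_ring
      _ = A * y := by rw [hB2, mul_one]
  have f1 : (p + x) * A * (p + y) = A * p + A * y + B * x + B * (x * y) := by
    calc _ = p * A * p + p * A * y + x * A * p + x * A * y := by noncomm_ring
      _ = A * (p * p) + A * (p * y) + B * (x * p) + B * (x * y) := by
        rw [← hAp, hxA]; noncomm_ring
      _ = _ := by rw [hpp, hpy, hxp]
  have f2 : (1 - p - y) * B * (1 - p - x) = B * (1 - p) - B * x - A * y + A * (y * x) := by
    calc _ = (B - p * B - y * B) * (1 - p - x) := by noncomm_ring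
      _ = B - B * p - B * x - (B * p - B * (p * p) - B * (p * x)) - A * y + A * (y * p)
           + A * (y * x) := by rw [← hBp, hyB]; noncomm_ring
      _ = _ := by rw [hpp, hpx, hyp]; noncomm_ring
  have g1 : A * (1 - p) = 1 - p := by
    calc A * (1 - p) = A * (1 + y * x) * (1 - p) := by
          have : (1 + y * x) * (1 - p) = 1 - p := by
            have : y * x * (1 - p) = 0 := by rw [mul_assoc, mul_sub, hxp]; simp
            rw [add_mul, this]; simp
          rw [mul_assoc, this]
      _ = _ := by rw [hA1, one_mul]
  have g2 : B * p = p := by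
    calc B * p = B * (1 + x * y) * p := by
          have : (1 + x * y) * p = p := by rw [add_mul, mul_assoc, hyp]; simp
          rw [mul_assoc, this]
      _ = _ := by rw [hB1, one_mul]
  have k1 : A * p + A * (y * x) = p := by
    have : A * p + A * (y * x) = A * (1 + y * x) - A * (1 - p) := by noncomm_ring
    rw [this, hA1, g1]; abel
  have k2 : B * (1 - p) + B * (x * y) = 1 - p := by
    have : B * (1 - p) + B * (x * y) = B * (1 + x * y) - B * p := by noncomm_ring
    rw [this, hB1, g2]
  rw [f1, f2]
  calc _ = (A * p + A * (y * x)) + (B * (1 - p) + B * (x * y)) := by abel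
    _ = 1 := by rw [k1, k2]; abel

theorem aux_sqrt {H : Type*} [NormedAddCommGroup H] [InnerProductSpace ℂ H]
    [CompleteSpace H] (P a : H →L[ℂ] H) (ha : 0 ≤ a) (hPa : Commute a P) :
    CFC.sqrt (1 + a) * Ring.inverse (CFC.sqrt (1 + a)) = 1 ∧
    Ring.inverse (CFC.sqrt (1 + a)) * CFC.sqrt (1 + a) = 1 ∧
    CFC.sqrt (1 + a) * CFC.sqrt (1 + a) = 1 + a ∧
    Ring.inverse (CFC.sqrt (1 + a)) * P = P * Ring.inverse (CFC.sqrt (1 + a)) ∧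
    IsSelfAdjoint (Ring.inverse (CFC.sqrt (1 + a))) := by
  have h1 : (0 : H →L[ℂ] H) ≤ 1 + a := add_nonneg zero_le_one ha
  have hu : IsUnit (1 + a) := CStarAlgebra.isUnit_of_le 1 (le_add_of_nonneg_right ha)
  have hus : IsUnit (CFC.sqrt (1 + a)) := (CFC.isUnit_sqrt_iff _ h1).2 hu
  have hm1 := Ring.mul_inverse_cancel _ hus
  have hm2 := Ring.inverse_mul_cancel _ hus
  have hc : CFC.sqrt (1 + a) * P = P * CFC.sqrt (1 + a) :=
    Commute.cfcₙ_nnreal (b := P) ((Commute.one_left P).add_left hPa) NNReal.sqrt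
  refine ⟨hm1, hm2, CFC.sqrt_mul_sqrt_self _ h1, ?_,
    (IsSelfAdjoint.of_nonneg (CFC.sqrt_nonneg _)).ringInverse⟩
  generalize CFC.sqrt (1 + a) = s at *
  calc Ring.inverse s * P = Ring.inverse s * P * (s * Ring.inverse s) := by rw [hm1, mul_one]
    _ = Ring.inverse s * (P * s) * Ring.inverse s := by noncomm_ring
    _ = (Ring.inverse s * s) * P * Ring.inverse s := by rw [← hc]; noncomm_ring
    _ = _ := by rw [hm2, one_mul]

/-- **angle addition formula.** Under the assumptions of the four projections
lemma, if moreover `Ran (U₁* Q₂ U₁) = G(Z)` for an angular operator `Z` for `P` and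
`I + X₂*X₁` maps `Ran P` onto `Ran P`, then
`X₂ − X₁ = (I + X₁X₁*)^{1/2} Z (I + X₁*X₁)^{-1/2} (I + X₁*X₂)`. -/
theorem angle_addition_formula {H : Type*} [NormedAddCommGroup H] [InnerProductSpace ℂ H]
    [CompleteSpace H] [TopologicalSpace.SeparableSpace H]
    (P Q₁ Q₂ X₁ X₂ Z : H →L[ℂ] H)
    (hP : IsOrthogonalProjection P) (hQ₁ : IsOrthogonalProjection Q₁)
    (hQ₂ : IsOrthogonalProjection Q₂)
    (hPQ₁ : ‖P - Q₁‖ < 1) (hPQ₂ : ‖P - Q₂‖ < 1)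
    (hX₁ : IsAngularOperator P X₁) (hX₁g : HasGraphRange P X₁ Q₁)
    (hX₂ : IsAngularOperator P X₂) (hX₂g : HasGraphRange P X₂ Q₂)
    (hZ : IsAngularOperator P Z)
    (hZg : HasGraphRange P Z (adjoint (angularUnitary P X₁) * Q₂ * angularUnitary P X₁))
    (hfull : ⇑(1 + adjoint X₂ * X₁) '' Set.range ⇑P = Set.range ⇑P) :
    X₂ - X₁ = CFC.sqrt (1 + X₁ * adjoint X₁) * Z *
      Ring.inverse (CFC.sqrt (1 + adjoint X₁ * X₁)) * (1 + adjoint X₁ * X₂) := by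
  obtain ⟨hPs, hPP⟩ := hP
  have ang : ∀ X : H →L[ℂ] H, IsAngularOperator P X → P * X = 0 ∧ X * P = X := by
    intro X hX
    unfold IsAngularOperator at hX
    constructor
    · rw [hX]
      calc _ = (P - P * P) * X * P := by noncomm_ring
        _ = 0 := by rw [hPP]; simp
    · calc X * P = (1 - P) * X * (P * P) := by rw [← mul_assoc, ← hX]
        _ = X := by rw [hPP, ← hX]
  obtain ⟨hpx, hxp⟩ := ang X₁ hX₁
  obtain ⟨hpx2, hxp2⟩ := ang X₂ hX₂
  obtain ⟨hpz, hzp⟩ := ang Z hZ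
  have hyp : adjoint X₁ * P = 0 := by
    have := congrArg star hpx
    rwa [star_mul, hPs.star_eq, star_zero, star_eq_adjoint] at this
  have hpy : P * adjoint X₁ = adjoint X₁ := by
    have := congrArg star hxp
    rwa [star_mul, hPs.star_eq, star_eq_adjoint] at this
  obtain ⟨hs1, hs2, hss, hsp, hsa⟩ := aux_sqrt P (adjoint X₁ * X₁)
    (by rw [← star_eq_adjoint]; exact star_mul_self_nonneg X₁)
    (by change adjoint X₁ * X₁ * P = P * (adjoint X₁ * X₁)
        rw [mul_assoc, hxp, ← mul_assoc, hpy])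
  obtain ⟨ht1, ht2, htt, htp, hta⟩ := aux_sqrt P (X₁ * adjoint X₁)
    (by rw [← star_eq_adjoint]; exact mul_star_self_nonneg X₁)
    (by change X₁ * adjoint X₁ * P = P * (X₁ * adjoint X₁)
        rw [mul_assoc, hyp, ← mul_assoc, hpx]; simp)
  have hUV := aux_UV P X₁ (adjoint X₁) _ _ _ _ hPP hpx hxp hyp hpy hs1 hs2 ht1 ht2 hss htt hsp htp
  have hUs : adjoint (angularUnitary P X₁) =
      P * Ring.inverse (CFC.sqrt (1 + adjoint X₁ * X₁)) * (P + adjoint X₁) +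
      (1 - P) * Ring.inverse (CFC.sqrt (1 + X₁ * adjoint X₁)) * ((1 - P) - X₁) := by
    have hst : star (adjoint X₁) = X₁ := by rw [← star_eq_adjoint, star_star]
    unfold angularUnitary
    rw [← star_eq_adjoint (_ + _)]
    simp only [star_add, star_mul, star_sub, star_one, hPs.star_eq, hsa.star_eq, hta.star_eq, hst]
    rw [star_eq_adjoint]
    simp only [mul_assoc]
  have hUU : angularUnitary P X₁ * adjoint (angularUnitary P X₁) = 1 := by
    rw [hUs]; exact hUV
  generalize Ring.inverse (CFC.sqrt (1 + adjoint X₁ * X₁)) = si at *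
  generalize Ring.inverse (CFC.sqrt (1 + X₁ * adjoint X₁)) = ti at *
  generalize CFC.sqrt (1 + X₁ * adjoint X₁) = t at *
  generalize hU : angularUnitary P X₁ = U at *
  generalize hy : adjoint X₁ = y at *
  generalize hV : adjoint U = V at *
  -- block components of `V (P + X₂)`
  have hxx : X₁ * X₂ = 0 := by rw [← hxp, mul_assoc, hpx2, mul_zero]
  have z1 : P * (1 - P) = 0 := by rw [mul_sub, mul_one, hPP, sub_self]
  have z2 : (1 - P) * P = 0 := by rw [sub_mul, one_mul, hPP, sub_self]
  have hi : (1 - P) * (1 - P) = 1 - P := by rw [sub_mul, z1, one_mul, sub_zero]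
  have q1 : (P + y) * (P + X₂) = (1 + y * X₂) * P := by
    calc _ = P * P + P * X₂ + y * P + y * X₂ := by noncomm_ring
      _ = P + y * (X₂ * P) := by rw [hPP, hpx2, hyp, hxp2]; abel
      _ = _ := by noncomm_ring
  have q1' : P * ((1 + y * X₂) * P) = (1 + y * X₂) * P := by
    calc _ = P * P + (P * y) * X₂ * P := by noncomm_ring
      _ = _ := by rw [hPP, hpy]; noncomm_ring
  have q2 : (1 - P - X₁) * (P + X₂) = X₂ - X₁ := by
    calc _ = (P - P * P) + X₂ - P * X₂ - X₁ * P - X₁ * X₂ := by noncomm_ring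
      _ = _ := by rw [hPP, hpx2, hxp, hxx]; abel
  have q2' : (1 - P) * (X₂ - X₁) = X₂ - X₁ := by
    calc _ = X₂ - P * X₂ - (X₁ - P * X₁) := by noncomm_ring
      _ = _ := by rw [hpx, hpx2]; abel
  have htp' : (1 - P) * ti = ti * (1 - P) := by rw [mul_sub, sub_mul, htp]; simp
  have r : V * (P + X₂) = si * ((1 + y * X₂) * P) + ti * (X₂ - X₁) := by
    rw [hUs, add_mul, mul_assoc _ (P + y), q1, mul_assoc _ (1 - P - X₁), q2, ← hsp, htp',
      mul_assoc, q1', mul_assoc, q2']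
  have r1 : P * (V * (P + X₂)) = si * ((1 + y * X₂) * P) := by
    have : P * (ti * (X₂ - X₁)) = 0 := by
      rw [← q2', ← mul_assoc, ← htp, mul_assoc, ← mul_assoc P, z1]; simp
    rw [r, mul_add, this, ← mul_assoc, ← hsp, mul_assoc, q1', add_zero]
  have r2 : (1 - P) * (V * (P + X₂)) = ti * (X₂ - X₁) := by
    have : (1 - P) * (V * (P + X₂)) = V * (P + X₂) - P * (V * (P + X₂)) := by noncomm_ring
    rw [this, r1, r]; abel
  have key : Z * (P * (V * (P + X₂))) = (1 - P) * (V * (P + X₂)) := by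
    ext u
    have m1 : P u + X₂ (P u) ∈ Set.range ⇑Q₂ := by
      rw [hX₂g]; exact ⟨P u, ⟨u, rfl⟩, rfl⟩
    obtain ⟨v, hv⟩ := m1
    have m2 : V (P u + X₂ (P u)) ∈ Set.range ⇑(V * Q₂ * U) := by
      refine ⟨V v, ?_⟩
      have : U (V v) = v := DFunLike.congr_fun hUU v
      change V (Q₂ (U (V v))) = _
      rw [this, hv]
    rw [hZg] at m2
    obtain ⟨_, ⟨w, rfl⟩, hw⟩ := m2
    have e : (V * (P + X₂)) u = P w + Z (P w) := by
      have h2 : X₂ (P u) = X₂ u := DFunLike.congr_fun hxp2 u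
      rw [h2] at hw
      exact hw.symm
    have a1 : P (P w) = P w := DFunLike.congr_fun hPP w
    have a2 : P (Z (P w)) = 0 := DFunLike.congr_fun hpz (P w)
    change Z (P ((V * (P + X₂)) u)) = (V * (P + X₂)) u - P ((V * (P + X₂)) u)
    rw [e, map_add, a1, a2, add_zero, add_sub_cancel_left]
  rw [r1, r2] at key
  have n : Z * si * ((1 + y * X₂) * (1 - P)) = 0 := by
    have : (1 + y * X₂) * (1 - P) = 1 - P := by
      calc _ = 1 - P + y * (X₂ - X₂ * P) := by noncomm_ring
        _ = _ := by rw [hxp2]; simp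
    rw [this, ← hzp, mul_assoc Z, ← hsp, mul_assoc, mul_assoc, z1]; simp
  have full : Z * si * (1 + y * X₂) = ti * (X₂ - X₁) := by
    calc _ = Z * (si * ((1 + y * X₂) * P)) + Z * si * ((1 + y * X₂) * (1 - P)) := by noncomm_ring
      _ = _ := by rw [key, n, add_zero]
  calc X₂ - X₁ = t * (ti * (X₂ - X₁)) := by rw [← mul_assoc, ht1, one_mul]
    _ = t * (Z * si * (1 + y * X₂)) := by rw [full]
    _ = _ := by simp only [mul_assoc]
end

section
/- (Arcsine Law for smooth paths) Let γ : [a,b] → 𝒫 be a piecewise C¹-smooth path of orthogonal projections. Then arcsin(‖γ(b) − γ(a)‖) ≤ ∫_a^b ‖γ'(t)‖ dt, where the integrand is defined outside the finitely many non-smoothness points. -/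
open ContinuousLinearMap

/-- A map `γ` is a piecewise `C¹`-smooth path on `[a,b]` if there is a partition
`a = t₀ < … < t_n = b` such that `γ` is `C¹`-smooth on each `[t_j, t_{j+1}]`. -/
def PiecewiseC1On {E : Type*} [NormedAddCommGroup E] [NormedSpace ℝ E]
    (γ : ℝ → E) (a b : ℝ) : Prop :=
  ∃ (n : ℕ) (t : ℕ → ℝ), t 0 = a ∧ t n = b ∧ (∀ i < n, t i < t (i + 1)) ∧
    ∀ i < n, ContDiffOn ℝ 1 γ (Set.Icc (t i) (t (i + 1)))


open MeasureTheory intervalIntegral in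
lemma integral_piece {E : Type*} [NormedAddCommGroup E] [NormedSpace ℝ E]
    (γ : ℝ → E) {c d : ℝ} (hcd : c < d) (hγ : ContDiffOn ℝ 1 γ (Set.Icc c d)) :
    ∃ l : ℝ → ℝ, Continuous l ∧ (∀ t ∈ Set.Icc c d, l t = ‖derivWithin γ (Set.Icc c d) t‖) ∧
      (∀ t, 0 ≤ l t) ∧
      (∫ t in c..d, l t) = (∫ t in c..d, ‖deriv γ t‖) ∧
      IntervalIntegrable (fun t => ‖deriv γ t‖) volume c d := by
  have hc : ContinuousOn (derivWithin γ (Set.Icc c d)) (Set.Icc c d) :=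
    hγ.continuousOn_derivWithin (uniqueDiffOn_Icc hcd) le_rfl
  let l : ℝ → ℝ := Set.IccExtend hcd.le
    ((Set.Icc c d).domRestrict (fun t => ‖derivWithin γ (Set.Icc c d) t‖))
  have hl : Continuous l := (continuousOn_iff_continuous_domRestrict.1 hc.norm).Icc_extend'
  have hle : ∀ t ∈ Set.Icc c d, l t = ‖derivWithin γ (Set.Icc c d) t‖ := by
    intro t ht
    simp only [l]
    rw [Set.IccExtend_of_mem _ _ ht]; rfl
  have heq : Set.EqOn l (fun t => ‖deriv γ t‖) (Set.Ioo c d) := by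
    intro t ht
    rw [hle t (Set.Ioo_subset_Icc_self ht), derivWithin_of_mem_nhds (Icc_mem_nhds ht.1 ht.2)]
  have hae : ∀ᵐ t ∂volume.restrict (Set.Ioc c d), l t = ‖deriv γ t‖ := by
    rw [← Measure.restrict_congr_set Ioo_ae_eq_Ioc]
    exact (ae_restrict_mem measurableSet_Ioo).mono fun t ht => heq ht
  have hae' : l =ᵐ[volume.restrict (Set.uIoc c d)] (fun t => ‖deriv γ t‖) := by
    rw [Set.uIoc_of_le hcd.le]; exact hae
  refine ⟨l, hl, hle, fun t => ?_, ?_, (hl.intervalIntegrable c d).congr_ae hae'⟩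
  · exact norm_nonneg _
  · rw [integral_of_le hcd.le, integral_of_le hcd.le]
    exact integral_congr_ae hae

section
variable {H : Type*} [NormedAddCommGroup H] [InnerProductSpace ℂ H] [CompleteSpace H]

lemma IsOrthogonalProjection.compl {P : H →L[ℂ] H} (h : IsOrthogonalProjection P) :
    IsOrthogonalProjection (1 - P) :=
  ⟨(IsSelfAdjoint.one _).sub h.1, by
    have := h.2
    simp [sub_mul, mul_sub, this]⟩

lemma IsOrthogonalProjection.inner_eq {P : H →L[ℂ] H} (h : IsOrthogonalProjection P) (x y : H) :
    inner ℂ (P x) y = inner ℂ x (P y) := by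
  have := ContinuousLinearMap.adjoint_inner_left P y x
  rwa [ContinuousLinearMap.isSelfAdjoint_iff'.1 h.1] at this

lemma IsOrthogonalProjection.app {P : H →L[ℂ] H} (h : IsOrthogonalProjection P) (x : H) :
    P (P x) = P x := by
  have := congrArg (fun A : H →L[ℂ] H => A x) h.2
  simpa using this

lemma IsOrthogonalProjection.re_inner {P : H →L[ℂ] H} (h : IsOrthogonalProjection P) (x : H) :
    (inner ℂ x (P x)).re = ‖P x‖ ^ 2 := by
  rw [← h.app, ← h.inner_eq, h.app]
  exact inner_self_eq_norm_sq (𝕜 := ℂ) (P x)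

lemma IsOrthogonalProjection.pyth {P : H →L[ℂ] H} (h : IsOrthogonalProjection P) (x : H) :
    ‖P x‖ ^ 2 + ‖(1 - P) x‖ ^ 2 = ‖x‖ ^ 2 := by
  rw [← h.re_inner, ← h.compl.re_inner, ← Complex.add_re, ← inner_add_right]
  simp only [ContinuousLinearMap.sub_apply, ContinuousLinearMap.one_apply, add_sub_cancel]
  exact inner_self_eq_norm_sq (𝕜 := ℂ) x

lemma off_diag {P D : H →L[ℂ] H} (h : IsOrthogonalProjection P) (hD : D = D * P + P * D) (x : H) :
    (inner ℂ x (D x)).re ≤ 2 * ‖D‖ * (‖P x‖ * ‖(1 - P) x‖) := by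
  have e1 : ∀ y, D y = D (P y) + P (D y) := fun y => by
    have := congrArg (fun A : H →L[ℂ] H => A y) hD
    simpa using this
  have key : inner ℂ x (D x) = inner ℂ (P x) (D ((1 - P) x)) + inner ℂ ((1 - P) x) (D (P x)) := by
    have a1 : P (D (P x)) = 0 := by
      have := e1 (P x)
      rw [h.app] at this
      simpa using this
    rw [h.inner_eq, h.compl.inner_eq, ← inner_add_right]
    congr 1
    simp only [ContinuousLinearMap.sub_apply, ContinuousLinearMap.one_apply, map_sub, a1]
    rw [e1 x]
    abel_nf
    simp [h.app, a1]
  rw [key, Complex.add_re]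
  have b1 : (inner ℂ (P x) (D ((1 - P) x))).re ≤ ‖P x‖ * (‖D‖ * ‖(1 - P) x‖) :=
    (re_inner_le_norm (𝕜 := ℂ) _ _).trans (by gcongr; exact D.le_opNorm _)
  have b2 : (inner ℂ ((1 - P) x) (D (P x))).re ≤ ‖(1 - P) x‖ * (‖D‖ * ‖P x‖) :=
    (re_inner_le_norm (𝕜 := ℂ) _ _).trans (by gcongr; exact D.le_opNorm _)
  linarith

lemma piece_eps (γ : ℝ → (H →L[ℂ] H)) {c d : ℝ} (hcd : c < d)
    (hproj : ∀ t ∈ Set.Icc c d, IsOrthogonalProjection (γ t))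
    (hγ : ContDiffOn ℝ 1 γ (Set.Icc c d)) (x : H) (hx : ‖x‖ = 1)
    (l : ℝ → ℝ) (hl : Continuous l)
    (hle : ∀ t ∈ Set.Icc c d, l t = ‖derivWithin γ (Set.Icc c d) t‖) (hl0 : ∀ t, 0 ≤ l t)
    (α : ℝ) (hα : 0 ≤ α) (h0 : ‖γ c x‖ ≤ Real.sin α) (ε : ℝ) (hε : 0 < ε)
    (hlt : α + (∫ t in c..d, l t) + ε * (1 + (d - c)) < Real.pi / 2) :
    ‖γ d x‖ ^ 2 ≤ Real.sin (α + (∫ t in c..d, l t) + ε * (1 + (d - c))) ^ 2 := by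
  let θ : ℝ → ℝ := fun t => α + (∫ s in c..t, l s) + ε * (1 + (t - c))
  have hθd : ∀ t, HasDerivAt θ (l t + ε) t := by
    intro t
    have h1 : HasDerivAt (fun t => ∫ s in c..t, l s) (l t) t :=
      hl.integral_hasStrictDerivAt c t |>.hasDerivAt
    have h2 : HasDerivAt (fun t => ε * (1 + (t - c))) (ε * 1) t :=
      (((hasDerivAt_id t).sub_const c).const_add 1).const_mul ε
    rw [mul_one] at h2
    exact (h1.const_add α).add h2
  have hmono : StrictMono θ := strictMono_of_hasDerivAt_pos hθd
    (fun t => by have := hl0 t; linarith)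
  have hθc : θ c = α + ε := by simp [θ]
  have hpos : ∀ t, c ≤ t → 0 < θ t := fun t ht => by
    have := hmono.monotone ht; linarith
  have hpi : ∀ t, t ≤ d → θ t < Real.pi / 2 := fun t ht => (hmono.monotone ht).trans_lt hlt
  let Φ : (H →L[ℂ] H) →L[ℝ] ℝ := Complex.reCLM.comp
    (((innerSL ℂ x).comp (ContinuousLinearMap.apply ℂ H x)).restrictScalars ℝ)
  have hΦ : ∀ A, Φ A = (inner ℂ x (A x)).re := fun A => rfl
  let f : ℝ → ℝ := fun t => Φ (γ t)
  have hf : ∀ t ∈ Set.Icc c d, f t = ‖γ t x‖ ^ 2 := fun t ht => (hproj t ht).re_inner x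
  let B : ℝ → ℝ := fun t => Real.sin (θ t) ^ 2
  have hB : ∀ t, HasDerivAt B (2 * Real.sin (θ t) * (Real.cos (θ t) * (l t + ε))) t := by
    intro t
    have h := ((hθd t).sin).pow 2
    norm_num at h
    exact h
  have hder : ∀ t ∈ Set.Icc c d, HasDerivWithinAt γ (derivWithin γ (Set.Icc c d) t)
      (Set.Icc c d) t := fun t ht =>
    ((hγ.differentiableOn one_ne_zero) t ht).hasDerivWithinAt
  have main := image_le_of_deriv_right_lt_deriv_boundary (f := f)
    (f' := fun t => Φ (derivWithin γ (Set.Icc c d) t)) (a := c) (b := d)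
    (Φ.continuous.comp_continuousOn hγ.continuousOn)
    (fun t ht => Φ.hasFDerivAt.comp_hasDerivWithinAt t
      ((hder t (Set.Ico_subset_Icc_self ht)).mono_of_mem_nhdsWithin (Icc_mem_nhdsGE_of_mem ht)))
    (B := B) (B' := fun t => 2 * Real.sin (θ t) * (Real.cos (θ t) * (l t + ε)))
    (by
      rw [hf c ⟨le_rfl, hcd.le⟩]
      simp only [B]
      have : Real.sin α ≤ Real.sin (θ c) := by
        apply Real.sin_le_sin_of_le_of_le_pi_div_two
        · linarith [Real.pi_pos]
        · exact (hpi c hcd.le).le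
        · linarith
      gcongr
      exact h0.trans this)
    hB
    (by
      intro t ht hft
      have htI := Set.Ico_subset_Icc_self ht
      have hP := hproj t htI
      have hs : 0 < Real.sin (θ t) := Real.sin_pos_of_pos_of_lt_pi (hpos t ht.1)
        (by linarith [hpi t ht.2.le, Real.pi_pos])
      have hcpos : 0 < Real.cos (θ t) := Real.cos_pos_of_mem_Ioo
        ⟨by linarith [hpos t ht.1, Real.pi_pos], hpi t ht.2.le⟩
      have n1 : ‖γ t x‖ = Real.sin (θ t) := by
        rw [hf t htI] at hft
        exact (pow_left_inj₀ (norm_nonneg _) hs.le two_ne_zero).1 hft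
      have n2 : ‖(1 - γ t) x‖ = Real.cos (θ t) := by
        have := hP.pyth x
        rw [hx, n1] at this
        have h3 := Real.sin_sq_add_cos_sq (θ t)
        exact (pow_left_inj₀ (norm_nonneg _) hcpos.le two_ne_zero).1 (by linarith)
      have hD : derivWithin γ (Set.Icc c d) t =
          derivWithin γ (Set.Icc c d) t * γ t + γ t * derivWithin γ (Set.Icc c d) t := by
        have h1 := (hder t htI).mul (hder t htI)
        have h2 : HasDerivWithinAt γ (derivWithin γ (Set.Icc c d) t * γ t +
            γ t * derivWithin γ (Set.Icc c d) t) (Set.Icc c d) t :=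
          h1.congr (fun s hs => ((hproj s hs).2).symm) hP.2.symm
        exact h2.derivWithin (uniqueDiffOn_Icc hcd t htI)
      have := off_diag hP hD x
      rw [n1, n2, ← hle t htI] at this
      show Φ _ < _
      rw [hΦ]
      have h5 : 0 < ε * (Real.sin (θ t) * Real.cos (θ t)) := by positivity
      nlinarith)
    (x := d) ⟨hcd.le, le_rfl⟩
  rw [hf d ⟨hcd.le, le_rfl⟩] at main
  exact main

open Filter Topology in
lemma piece (γ : ℝ → (H →L[ℂ] H)) {c d : ℝ} (hcd : c < d)
    (hproj : ∀ t ∈ Set.Icc c d, IsOrthogonalProjection (γ t))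
    (hγ : ContDiffOn ℝ 1 γ (Set.Icc c d)) (x : H) (hx : ‖x‖ = 1)
    (α : ℝ) (hα : 0 ≤ α) (h0 : ‖γ c x‖ ≤ Real.sin α)
    (hlt : α + (∫ t in c..d, ‖deriv γ t‖) < Real.pi / 2) :
    ‖γ d x‖ ≤ Real.sin (α + ∫ t in c..d, ‖deriv γ t‖) := by
  obtain ⟨l, hl, hle, hl0, hint, -⟩ := integral_piece γ hcd hγ
  rw [← hint] at hlt ⊢
  have hI : 0 ≤ ∫ t in c..d, l t := intervalIntegral.integral_nonneg hcd.le fun t _ => hl0 t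
  have hs : 0 ≤ Real.sin (α + ∫ t in c..d, l t) :=
    Real.sin_nonneg_of_nonneg_of_le_pi (by positivity) (by linarith [Real.pi_pos])
  refine (pow_le_pow_iff_left₀ (norm_nonneg _) hs two_ne_zero).1 ?_
  have hc : Continuous fun ε : ℝ => α + (∫ t in c..d, l t) + ε * (1 + (d - c)) := by fun_prop
  have ht : Tendsto (fun ε : ℝ => Real.sin (α + (∫ t in c..d, l t) + ε * (1 + (d - c))) ^ 2)
      (𝓝[>] 0) (𝓝 (Real.sin (α + ∫ t in c..d, l t) ^ 2)) := by
    have hc2 : Continuous fun ε : ℝ =>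
        Real.sin (α + (∫ t in c..d, l t) + ε * (1 + (d - c))) ^ 2 :=
      (Real.continuous_sin.comp hc).pow 2
    have := hc2.tendsto 0
    rw [zero_mul, add_zero] at this
    exact this.mono_left nhdsWithin_le_nhds
  have hev : ∀ᶠ ε : ℝ in 𝓝[>] 0,
      α + (∫ t in c..d, l t) + ε * (1 + (d - c)) < Real.pi / 2 := by
    have h := hc.tendsto 0
    have h' : Tendsto (fun ε : ℝ => α + (∫ t in c..d, l t) + ε * (1 + (d - c))) (𝓝 0)
        (𝓝 (α + ∫ t in c..d, l t)) := by
      rwa [zero_mul, add_zero] at h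
    exact (h'.mono_left nhdsWithin_le_nhds).eventually (gt_mem_nhds hlt)
  refine ge_of_tendsto ht ?_
  filter_upwards [hev, self_mem_nhdsWithin] with ε h1 h2
  exact piece_eps γ hcd hproj hγ x hx l hl hle hl0 α hα h0 ε h2 h1

lemma chain (γ : ℝ → (H →L[ℂ] H)) (n : ℕ) (t : ℕ → ℝ) (hmono : ∀ i < n, t i < t (i + 1))
    (hγ : ∀ i < n, ContDiffOn ℝ 1 γ (Set.Icc (t i) (t (i + 1))))
    (hproj : ∀ i < n, ∀ s ∈ Set.Icc (t i) (t (i + 1)), IsOrthogonalProjection (γ s))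
    (x : H) (hx : ‖x‖ = 1) (h0 : γ (t 0) x = 0)
    (hlt : (∫ s in (t 0)..(t n), ‖deriv γ s‖) < Real.pi / 2) :
    ‖γ (t n) x‖ ≤ Real.sin (∫ s in (t 0)..(t n), ‖deriv γ s‖) := by
  induction n with
  | zero => simp [h0]
  | succ n ih =>
    have hint : ∀ i < n + 1, IntervalIntegrable (fun s => ‖deriv γ s‖) MeasureTheory.volume
        (t i) (t (i + 1)) := fun i hi => by
      obtain ⟨l, -, -, -, -, h⟩ := integral_piece γ (hmono i hi) (hγ i hi)
      exact h
    have hint0 : IntervalIntegrable (fun s => ‖deriv γ s‖) MeasureTheory.volume (t 0) (t n) :=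
      IntervalIntegrable.trans_iterate fun i hi => hint i (by omega)
    have hle : ∀ m ≤ n, t 0 ≤ t m := by
      intro m hm
      induction m with
      | zero => exact le_rfl
      | succ m ihm => exact (ihm (by omega)).trans (hmono m (by omega)).le
    have hadd := intervalIntegral.integral_add_adjacent_intervals hint0 (hint n (by omega))
    have hnn : 0 ≤ ∫ s in (t 0)..(t n), ‖deriv γ s‖ :=
      intervalIntegral.integral_nonneg (hle n le_rfl) fun _ _ => norm_nonneg _
    have hnn' : 0 ≤ ∫ s in (t n)..(t (n + 1)), ‖deriv γ s‖ :=
      intervalIntegral.integral_nonneg (hmono n (by omega)).le fun _ _ => norm_nonneg _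
    rw [← hadd] at hlt ⊢
    refine piece γ (hmono n (by omega)) (hproj n (by omega)) (hγ n (by omega)) x hx _ hnn ?_ hlt
    exact ih (fun i hi => hmono i (by omega)) (fun i hi => hγ i (by omega))
      (fun i hi => hproj i (by omega)) (by linarith)

lemma proj_diff {P Q : H →L[ℂ] H} (hP : IsOrthogonalProjection P) (hQ : IsOrthogonalProjection Q)
    (s : ℝ) (hs : 0 ≤ s) (h1 : ∀ x, ‖x‖ = 1 → P x = 0 → ‖Q x‖ ≤ s)
    (h2 : ∀ x, ‖x‖ = 1 → (1 - P) x = 0 → ‖(1 - Q) x‖ ≤ s) : ‖Q - P‖ ≤ s := by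
  have scale : ∀ (A B : H →L[ℂ] H), (∀ x, ‖x‖ = 1 → B x = 0 → ‖A x‖ ≤ s) →
      ∀ x, B x = 0 → ‖A x‖ ≤ s * ‖x‖ := by
    intro A B h x hx
    rcases eq_or_ne x 0 with rfl | hne
    · simp
    have hn : 0 < ‖x‖ := norm_pos_iff.2 hne
    have := h (((‖x‖ : ℂ)⁻¹) • x) (by simp [norm_smul, hn.ne']) (by simp [hx])
    rw [map_smul, norm_smul] at this
    simp only [norm_inv, Complex.norm_real, norm_norm] at this
    rw [inv_mul_le_iff₀ hn] at this
    linarith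
  refine ContinuousLinearMap.opNorm_le_bound _ hs fun x => ?_
  have e1 := scale _ _ h1 ((1 - P) x) (by simp [hP.app])
  have e2 := scale _ _ h2 (P x) (by simp [hP.app])
  have p1 := hQ.pyth ((Q - P) x)
  have a1 : Q ((Q - P) x) = Q ((1 - P) x) := by simp [hQ.app]
  have a2 : (1 - Q) ((Q - P) x) = - ((1 - Q) (P x)) := by simp [hQ.app]
  rw [a1, a2, norm_neg] at p1
  have p2 := hP.pyth x
  refine (pow_le_pow_iff_left₀ (norm_nonneg _) (by positivity) two_ne_zero).1 ?_
  rw [← p1, mul_pow, ← p2]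
  have q1 := pow_le_pow_left₀ (norm_nonneg _) e1 2
  have q2 := pow_le_pow_left₀ (norm_nonneg _) e2 2
  rw [mul_pow] at q1 q2
  linarith

end

/-- **Arcsine Law for smooth paths.** For a piecewise `C¹`-smooth path
`γ : [a,b] → 𝒫` of orthogonal projections,
`arcsin ‖γ(b) − γ(a)‖ ≤ ∫_a^b ‖γ'(t)‖ dt`. -/
theorem arcsine_law_smooth {H : Type*} [NormedAddCommGroup H] [InnerProductSpace ℂ H]
    [CompleteSpace H] [TopologicalSpace.SeparableSpace H]
    (a b : ℝ) (γ : ℝ → (H →L[ℂ] H))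
    (hproj : ∀ t ∈ Set.Icc a b, IsOrthogonalProjection (γ t))
    (hγ : PiecewiseC1On γ a b) :
    Real.arcsin ‖γ b - γ a‖ ≤ ∫ t in a..b, ‖deriv γ t‖ := by
  obtain ⟨n, t, rfl, rfl, hmono, hC⟩ := hγ
  rcases le_or_gt (Real.pi / 2) (∫ s in (t 0)..(t n), ‖deriv γ s‖) with hbig | hlt
  · exact (Real.arcsin_le_pi_div_two _).trans hbig
  have hle : ∀ k m, k ≤ m → m ≤ n → t k ≤ t m := by
    intro k m hkm
    induction m, hkm using Nat.le_induction with
    | base => intro _; exact le_rfl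
    | succ m _ ihm => intro hm; exact (ihm (by omega)).trans (hmono m (by omega)).le
  have h0n : t 0 ≤ t n := hle 0 n (by omega) le_rfl
  have hpr : ∀ i < n, ∀ s ∈ Set.Icc (t i) (t (i + 1)), IsOrthogonalProjection (γ s) :=
    fun i hi s hs => hproj s ⟨(hle 0 i (by omega) (by omega)).trans hs.1,
      hs.2.trans (hle (i + 1) n (by omega) le_rfl)⟩
  have hnn : 0 ≤ ∫ s in (t 0)..(t n), ‖deriv γ s‖ :=
    intervalIntegral.integral_nonneg h0n fun _ _ => norm_nonneg _
  have hd : ∀ s, ‖deriv (fun s => 1 - γ s) s‖ = ‖deriv γ s‖ := fun s => by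
    rw [deriv_const_sub, norm_neg]
  have hs : 0 ≤ Real.sin (∫ s in (t 0)..(t n), ‖deriv γ s‖) :=
    Real.sin_nonneg_of_nonneg_of_le_pi hnn (by linarith [Real.pi_pos])
  have hfin : ‖γ (t n) - γ (t 0)‖ ≤ Real.sin (∫ s in (t 0)..(t n), ‖deriv γ s‖) := by
    refine proj_diff (hproj _ ⟨le_rfl, h0n⟩) (hproj _ ⟨h0n, le_rfl⟩) _ hs ?_ ?_
    · intro x hx h0
      exact chain γ n t hmono hC hpr x hx h0 hlt
    · intro x hx h0
      have := chain (fun s => 1 - γ s) n t hmono (fun i hi => contDiffOn_const.sub (hC i hi))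
        (fun i hi s hs => (hpr i hi s hs).compl) x hx h0
      simp only [hd] at this
      exact this hlt
  exact (Real.arcsin_le_iff_le_sin' ⟨by linarith [Real.pi_pos], hlt⟩).2 hfin
end

section
/- Let γ : [a,b] → 𝒫 be a continuous path of orthogonal projections. Then there exists a sequence (γ_n) of piecewise C¹-smooth paths γ_n : [a,b] → 𝒫 with γ_n(a) = γ(a) and γ_n(b) = γ(b) for all n, such that γ_n converges to γ uniformly on [a,b] and the lengths converge: l(γ_n) → l(γ) in [0,∞]. -/
open ContinuousLinearMap

set_option linter.unusedSectionVars false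
set_option linter.unusedSimpArgs false

section
variable {A : Type*} [NormedRing A] [StarRing A] [CStarRing A] [CompleteSpace A]
  [NormedAlgebra ℝ A] [StarModule ℝ A]

lemma aux_norm_le_one {B : A} (hB : star B = B) (hBB : B * B = 1) : ‖B‖ ≤ 1 := by
  have h1 : ‖(1 : A)‖ ≤ 1 := by
    have h : ‖(1 : A)‖ * ‖(1 : A)‖ = ‖(1 : A)‖ := by
      rw [← CStarRing.norm_star_mul_self (x := (1 : A))]; simp
    nlinarith [norm_nonneg (1 : A)]
  have h : ‖B‖ * ‖B‖ ≤ 1 := by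
    rw [← CStarRing.norm_star_mul_self (x := B), hB, hBB]; exact h1
  nlinarith [norm_nonneg B]

noncomputable def auxM (B C : A) (s : ℝ) : A := (1 - s) • (C * B) + (1 + s) • (1 : A)
noncomputable def auxN (B C : A) (s : ℝ) : A := (1 + s) • (C * B) + (1 - s) • (1 : A)
/-- The symmetry path joining `B` to `C` -/
noncomputable def auxR (B C : A) (s : ℝ) : A := auxN B C s * Ring.inverse (auxM B C s) * B

lemma aux_norm_V {B C : A} (hB : star B = B) (hBB : B * B = 1) : ‖C * B - 1‖ ≤ ‖C - B‖ := by
  have : C * B - 1 = (C - B) * B := by rw [sub_mul, hBB]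
  rw [this]
  calc _ ≤ ‖C - B‖ * ‖B‖ := norm_mul_le _ _
    _ ≤ ‖C - B‖ * 1 := by gcongr; exact aux_norm_le_one hB hBB
    _ = _ := mul_one _

lemma auxM_eq (B C : A) (s : ℝ) : auxM B C s = (2 : ℝ) • (1 : A) + (1 - s) • (C * B - 1) := by
  unfold auxM; module

lemma auxM_isUnit {B C : A} (hB : star B = B) (hBB : B * B = 1) {d : ℝ} (hd : d < 1)
    (hBC : ‖C - B‖ ≤ 2 * d) {s : ℝ} (hs : s ∈ Set.Icc (0 : ℝ) 1) : IsUnit (auxM B C s) := by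
  have h : auxM B C s = (2 : ℝ) • ((1 : A) - ((s - 1) / 2) • (C * B - 1)) := by
    unfold auxM; module
  rw [h]
  have h2 : IsUnit ((1 : A) - ((s - 1) / 2) • (C * B - 1)) := by
    apply isUnit_one_sub_of_norm_lt_one
    rw [norm_smul, Real.norm_eq_abs]
    have : |(s - 1) / 2| ≤ 1 / 2 := by rw [abs_le]; constructor <;> linarith [hs.1, hs.2]
    have h3 := aux_norm_V (C := C) hB hBB
    nlinarith [norm_nonneg (C * B - 1), abs_nonneg ((s - 1) / 2)]
  have h3 : (2 : ℝ) • ((1 : A) - ((s - 1) / 2) • (C * B - 1)) = algebraMap ℝ A 2 * ((1 : A) - ((s - 1) / 2) • (C * B - 1)) := by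
    rw [Algebra.smul_def]
  rw [h3]
  exact ((isUnit_iff_ne_zero.2 (two_ne_zero' ℝ)).map (algebraMap ℝ A)).mul h2

lemma auxM_inv_norm {B C : A} (hB : star B = B) (hBB : B * B = 1) {d : ℝ} (hd : d < 1)
    (hBC : ‖C - B‖ ≤ 2 * d) {s : ℝ} (hs : s ∈ Set.Icc (0 : ℝ) 1) :
    ‖Ring.inverse (auxM B C s)‖ ≤ 1 / (2 * (1 - d)) := by
  have hu := Ring.mul_inverse_cancel _ (auxM_isUnit hB hBB hd hBC hs)
  set I := Ring.inverse (auxM B C s)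
  have h1 : ‖(1 : A)‖ ≤ 1 := aux_norm_le_one (star_one A) (one_mul 1)
  have h : (2 : ℝ) • I = 1 - (1 - s) • ((C * B - 1) * I) := by
    rw [auxM_eq, add_mul, smul_mul_assoc, smul_mul_assoc, one_mul] at hu
    exact eq_sub_of_add_eq hu
  have h2 : 2 * ‖I‖ ≤ 1 + 2 * d * ‖I‖ := by
    calc 2 * ‖I‖ = ‖(2 : ℝ) • I‖ := by rw [norm_smul]; simp
      _ ≤ ‖(1 : A)‖ + ‖(1 - s) • ((C * B - 1) * I)‖ := by rw [h]; exact norm_sub_le _ _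
      _ ≤ 1 + 1 * (2 * d * ‖I‖) := by
        gcongr
        rw [norm_smul]
        gcongr
        · rw [Real.norm_eq_abs, abs_le]; constructor <;> linarith [hs.1, hs.2]
        · refine (norm_mul_le _ _).trans ?_
          gcongr
          exact (aux_norm_V hB hBB).trans hBC
      _ = _ := by ring
  rw [le_div_iff₀ (by linarith)]
  linarith

lemma auxMN_comm (B C : A) (s r : ℝ) : auxN B C s * auxM B C r = auxM B C r * auxN B C s := by
  unfold auxN auxM
  simp only [add_mul, mul_add, smul_mul_assoc, mul_smul_comm, one_mul, mul_one]
  module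

lemma auxR_one {B C : A} (hBB : B * B = 1) : auxR B C 1 = C := by
  have h1 : auxM B C 1 = algebraMap ℝ A 2 := by
    unfold auxM; rw [Algebra.algebraMap_eq_smul_one]; module
  have h2 : auxN B C 1 = (C * B) * algebraMap ℝ A 2 := by
    unfold auxN; rw [Algebra.algebraMap_eq_smul_one, mul_smul_comm, mul_one]; module
  have hu : IsUnit (algebraMap ℝ A 2) := (isUnit_iff_ne_zero.2 (two_ne_zero' ℝ)).map (algebraMap ℝ A)
  unfold auxR
  rw [h1, h2, mul_assoc (C * B), Ring.mul_inverse_cancel _ hu, mul_one, mul_assoc, hBB, mul_one]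

lemma auxR_zero {B C : A} (hB : star B = B) (hBB : B * B = 1) {d : ℝ} (hd : d < 1)
    (hBC : ‖C - B‖ ≤ 2 * d) : auxR B C 0 = B := by
  have h2 : auxN B C 0 = auxM B C 0 := by unfold auxM auxN; simp
  unfold auxR
  rw [h2, Ring.mul_inverse_cancel _ (auxM_isUnit hB hBB hd hBC (by simp)), one_mul]

lemma auxR_props {B C : A} (hB : star B = B) (hBB : B * B = 1) (hC : star C = C)
    (hCC : C * C = 1) {d : ℝ} (hd : d < 1)
    (hBC : ‖C - B‖ ≤ 2 * d) {s : ℝ} (hs : s ∈ Set.Icc (0 : ℝ) 1) :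
    star (auxR B C s) = auxR B C s ∧ auxR B C s * auxR B C s = 1 := by
  have hu := auxM_isUnit hB hBB hd hBC hs
  have hMI := Ring.mul_inverse_cancel _ hu
  have hIM := Ring.inverse_mul_cancel _ hu
  have hcomm := auxMN_comm B C s s
  have hBC1 : ∀ x, B * (B * x) = x := fun x => by rw [← mul_assoc, hBB, one_mul]
  have hCC1 : ∀ x, C * (C * x) = x := fun x => by rw [← mul_assoc, hCC, one_mul]
  have hWM : B * C * auxM B C s = auxM B C s * (B * C) := by
    simp only [auxM, mul_add, add_mul, mul_smul_comm, smul_mul_assoc, mul_one, one_mul, mul_assoc,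
      hBB, hCC, hBC1, hCC1]
  have hWN : B * C * auxN B C s = B * auxM B C s * B := by
    simp only [auxM, auxN, mul_add, add_mul, mul_smul_comm, smul_mul_assoc, mul_one, one_mul,
      mul_assoc, hBB, hCC, hBC1, hCC1]
    abel
  have hNW : auxN B C s * (B * C) = B * auxM B C s * B := by
    simp only [auxM, auxN, mul_add, add_mul, mul_smul_comm, smul_mul_assoc, mul_one, one_mul,
      mul_assoc, hBB, hCC, hBC1, hCC1]
    abel
  have hBN : B * auxN B C s = B * C * auxM B C s * B := by
    simp only [auxM, auxN, mul_add, add_mul, mul_smul_comm, smul_mul_assoc, mul_one, one_mul,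
      mul_assoc, hBB, hCC, hBC1, hCC1]
    abel
  have hNB : auxN B C s * B = B * (B * C * auxM B C s) := by
    simp only [auxM, auxN, mul_add, add_mul, mul_smul_comm, smul_mul_assoc, mul_one, one_mul,
      mul_assoc, hBB, hCC, hBC1, hCC1]
    abel
  have hMs : star (auxM B C s) = B * auxM B C s * B := by
    simp only [auxM, star_add, star_smul, star_mul, star_one, hB, hC, star_trivial,
      mul_add, add_mul, mul_smul_comm, smul_mul_assoc, mul_one, one_mul,
      mul_assoc, hBB, hCC, hBC1, hCC1]
  have hNs : star (auxN B C s) = B * C * auxM B C s := by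
    simp only [auxM, auxN, star_add, star_smul, star_mul, star_one, hB, hC, star_trivial,
      mul_add, add_mul, mul_smul_comm, smul_mul_assoc, mul_one, one_mul,
      mul_assoc, hBB, hCC, hBC1, hCC1]
    abel
  unfold auxR
  generalize auxM B C s = M at *
  generalize auxN B C s = N at *
  generalize Ring.inverse M = I at *
  have hIN : I * N = N * I := by
    calc I * N = I * (N * M) * I := by rw [mul_assoc, mul_assoc, hMI, mul_one]
      _ = (I * M) * N * I := by rw [hcomm]; simp only [mul_assoc]
      _ = N * I := by rw [hIM, one_mul]
  have hIW : I * (B * C) = B * C * I := by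
    calc I * (B * C) = I * (B * C * M) * I := by
          rw [mul_assoc I, mul_assoc (B * C), hMI, mul_one]
      _ = (I * M) * (B * C) * I := by rw [hWM]; simp only [mul_assoc]
      _ = _ := by rw [hIM, one_mul]
  have hIs : star I = B * I * B := by
    have h1 : star I * star M = 1 := by rw [← star_mul, hMI, star_one]
    have h2 : star M * (B * I * B) = 1 := by
      rw [hMs]
      calc B * M * B * (B * I * B) = B * M * (B * B) * I * B := by simp only [mul_assoc]
        _ = B * (M * I) * B := by rw [hBB, mul_one]; simp only [mul_assoc]
        _ = 1 := by rw [hMI, mul_one, hBB]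
    exact left_inv_eq_right_inv h1 h2
  constructor
  · rw [star_mul, star_mul, hB, hIs, hNs, ← hIN]
    calc B * (B * I * B * (B * C * M)) = (B * B) * I * (B * (B * C * M)) := by
          simp only [mul_assoc]
      _ = I * N * B := by rw [hBB, one_mul, ← hNB, mul_assoc]
  · calc N * I * B * (N * I * B) = N * I * (B * N) * I * B := by simp only [mul_assoc]
      _ = N * (I * (B * C)) * M * B * I * B := by rw [hBN]; simp only [mul_assoc]
      _ = N * (B * C) * (I * M) * B * I * B := by rw [hIW]; simp only [mul_assoc]
      _ = B * M * (B * B) * I * B := by rw [hIM, hNW]; simp only [mul_assoc, one_mul]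
      _ = B * (M * I) * B := by rw [hBB]; simp only [mul_assoc, one_mul]
      _ = 1 := by rw [hMI, mul_one, hBB]

lemma auxR_lip {B C : A} (hB : star B = B) (hBB : B * B = 1) (hC : star C = C)
    (hCC : C * C = 1) {d : ℝ} (hd : d < 1)
    (hBC : ‖C - B‖ ≤ 2 * d) {s r : ℝ} (hs : s ∈ Set.Icc (0 : ℝ) 1) (hr : r ∈ Set.Icc (0 : ℝ) 1) :
    ‖auxR B C s - auxR B C r‖ ≤ ‖C - B‖ / (1 - d) ^ 2 * |s - r| := by
  have hus := auxM_isUnit hB hBB hd hBC hs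
  have hur := auxM_isUnit hB hBB hd hBC hr
  have hIs := auxM_inv_norm hB hBB hd hBC hs
  have hIr := auxM_inv_norm hB hBB hd hBC hr
  have hMIs := Ring.mul_inverse_cancel _ hus
  have hIMs := Ring.inverse_mul_cancel _ hus
  have hMIr := Ring.mul_inverse_cancel _ hur
  have hcs := auxMN_comm B C s s
  have key : auxN B C s * auxM B C r - auxM B C s * auxN B C r
      = (2 * (s - r)) • ((C * B - 1) * (C * B + 1)) := by
    simp only [auxM, auxN, mul_add, add_mul, sub_mul, mul_smul_comm, smul_mul_assoc, mul_one,
      one_mul]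
    module
  have hV := aux_norm_V (C := C) hB hBB
  have h1 := aux_norm_le_one (star_one A) (one_mul 1)
  have hB1 := aux_norm_le_one hB hBB
  have hC1 := aux_norm_le_one hC hCC
  have hV1 : ‖C * B + 1‖ ≤ 2 := by
    refine (norm_add_le _ _).trans ?_
    have := norm_mul_le C B
    nlinarith [norm_nonneg B, norm_nonneg C]
  unfold auxR
  generalize auxM B C s = M at *
  generalize auxN B C s = N at *
  generalize Ring.inverse M = I at *
  generalize auxM B C r = M' at *
  generalize auxN B C r = N' at *
  generalize Ring.inverse M' = I' at *
  have hIN : I * N = N * I := by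
    calc I * N = I * (N * M) * I := by rw [mul_assoc, mul_assoc, hMIs, mul_one]
      _ = (I * M) * N * I := by rw [hcs]; simp only [mul_assoc]
      _ = N * I := by rw [hIMs, one_mul]
  have : N * I * B - N' * I' * B
      = (2 * (s - r)) • (I * ((C * B - 1) * (C * B + 1)) * I' * B) := by
    have h : I * (N * M' - M * N') * I' * B = N * I * B - N' * I' * B := by
      calc _ = (I * N) * (M' * I') * B - (I * M) * N' * I' * B := by
            simp only [mul_sub, sub_mul, mul_assoc]
        _ = _ := by rw [hMIr, hIMs, hIN, mul_one, one_mul]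
    rw [← h, key]
    simp only [mul_smul_comm, smul_mul_assoc]
  rw [this, norm_smul, Real.norm_eq_abs, abs_mul, abs_two]
  have hd' : 0 < 1 - d := by linarith
  calc 2 * |s - r| * ‖I * ((C * B - 1) * (C * B + 1)) * I' * B‖
      ≤ 2 * |s - r| * (1 / (2 * (1 - d)) * (‖C - B‖ * 2) * (1 / (2 * (1 - d))) * 1) := by
        gcongr
        refine (norm_mul_le _ _).trans ?_
        gcongr
        refine (norm_mul_le _ _).trans ?_
        gcongr
        refine (norm_mul_le _ _).trans ?_
        gcongr
        refine (norm_mul_le _ _).trans ?_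
        gcongr
    _ = _ := by field_simp

lemma auxR_contDiff {B C : A} (hB : star B = B) (hBB : B * B = 1) {d : ℝ} (hd : d < 1)
    (hBC : ‖C - B‖ ≤ 2 * d) : ContDiffOn ℝ 1 (auxR B C) (Set.Icc 0 1) := by
  intro s hs
  obtain ⟨u, hu⟩ := auxM_isUnit hB hBB hd hBC hs
  apply ContDiffAt.contDiffWithinAt
  have h1 : ContDiff ℝ 1 (auxM B C) := by unfold auxM; fun_prop
  have h2 : ContDiff ℝ 1 (auxN B C) := by unfold auxN; fun_prop
  have h3 : ContDiffAt ℝ 1 (fun s => Ring.inverse (auxM B C s)) s := by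
    apply ContDiffAt.comp s (g := Ring.inverse) _ h1.contDiffAt
    rw [← hu]; exact contDiffAt_ringInverse ℝ u
  unfold auxR
  exact (h2.contDiffAt.mul h3).mul contDiffAt_const

/-- path of projections joining `P` to `Q` -/
noncomputable def auxPath (P Q : A) (s : ℝ) : A :=
  (1 / 2 : ℝ) • (1 + auxR ((2 : ℝ) • P - 1) ((2 : ℝ) • Q - 1) s)

lemma aux_sym {P : A} (hP : star P = P) (hPP : P * P = P) :
    star ((2 : ℝ) • P - 1) = (2 : ℝ) • P - 1 ∧ ((2 : ℝ) • P - 1) * ((2 : ℝ) • P - 1) = 1 := by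
  constructor
  · simp [hP]
  · simp only [mul_sub, sub_mul, mul_smul_comm, smul_mul_assoc, hPP, mul_one, one_mul]; module

lemma auxPath_props {P Q : A} (hP : star P = P) (hPP : P * P = P) (hQ : star Q = Q)
    (hQQ : Q * Q = Q) {d : ℝ} (hd : d < 1) (hPQ : ‖Q - P‖ ≤ d) :
    auxPath P Q 0 = P ∧ auxPath P Q 1 = Q ∧ ContDiffOn ℝ 1 (auxPath P Q) (Set.Icc 0 1) ∧
    (∀ s ∈ Set.Icc (0 : ℝ) 1, star (auxPath P Q s) = auxPath P Q s ∧
      auxPath P Q s * auxPath P Q s = auxPath P Q s) ∧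
    (∀ s ∈ Set.Icc (0 : ℝ) 1, ∀ r ∈ Set.Icc (0 : ℝ) 1,
      ‖auxPath P Q s - auxPath P Q r‖ ≤ ‖Q - P‖ / (1 - d) ^ 2 * |s - r|) := by
  obtain ⟨hB, hBB⟩ := aux_sym hP hPP
  obtain ⟨hC, hCC⟩ := aux_sym hQ hQQ
  have hn : ‖((2 : ℝ) • Q - 1) - ((2 : ℝ) • P - 1)‖ = 2 * ‖Q - P‖ := by
    have : ((2 : ℝ) • Q - 1) - ((2 : ℝ) • P - 1) = (2 : ℝ) • (Q - P) := by module
    rw [this, norm_smul]; simp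
  have hBC : ‖((2 : ℝ) • Q - 1) - ((2 : ℝ) • P - 1)‖ ≤ 2 * d := by rw [hn]; linarith
  refine ⟨?_, ?_, ?_, ?_, ?_⟩
  · unfold auxPath; rw [auxR_zero hB hBB hd hBC]; module
  · unfold auxPath; rw [auxR_one hBB]; module
  · unfold auxPath
    exact (contDiffOn_const.add (auxR_contDiff hB hBB hd hBC)).const_smul _
  · intro s hs
    obtain ⟨h1, h2⟩ := auxR_props hB hBB hC hCC hd hBC hs
    unfold auxPath
    constructor
    · simp [h1]
    · simp only [mul_add, add_mul, mul_smul_comm, smul_mul_assoc, h2, mul_one, one_mul]; module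
  · intro s hs r hr
    have := auxR_lip hB hBB hC hCC hd hBC hs hr
    rw [hn] at this
    have h : auxPath P Q s - auxPath P Q r = (1 / 2 : ℝ) •
        (auxR ((2 : ℝ) • P - 1) ((2 : ℝ) • Q - 1) s
          - auxR ((2 : ℝ) • P - 1) ((2 : ℝ) • Q - 1) r) := by
      unfold auxPath; module
    rw [h, norm_smul]
    have e : 2 * ‖Q - P‖ / (1 - d) ^ 2 * |s - r| = 2 * (‖Q - P‖ / (1 - d) ^ 2 * |s - r|) := by
      ring
    rw [e] at this
    norm_num
    linarith
end

lemma aux_evar_lip {E : Type*} [NormedAddCommGroup E] (f : ℝ → E) {c d K : ℝ} (hK : 0 ≤ K)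
    (hcd : c ≤ d)
    (h : ∀ x ∈ Set.Icc c d, ∀ y ∈ Set.Icc c d, ‖f x - f y‖ ≤ K * |x - y|) :
    eVariationOn f (Set.Icc c d) ≤ ENNReal.ofReal (K * (d - c)) := by
  have hl : LipschitzOnWith (Real.toNNReal K) f (Set.Icc c d) := by
    apply LipschitzOnWith.of_dist_le_mul
    intro x hx y hy
    rw [dist_eq_norm, Real.dist_eq, Real.coe_toNNReal _ hK]
    exact h x hx y hy
  have h1 := hl.comp_eVariationOn_le (g := (id : ℝ → ℝ)) (s := Set.Icc c d) (fun x hx => hx)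
  have h2 : eVariationOn (id : ℝ → ℝ) (Set.Icc c d) ≤ ENNReal.ofReal (d - c) := by
    have := (monotone_id.monotoneOn (Set.Icc c d)).eVariationOn_le
      (Set.left_mem_Icc.2 hcd) (Set.right_mem_Icc.2 hcd)
    simpa using this
  rw [ENNReal.ofReal_mul hK]
  refine le_trans h1 ?_
  exact mul_le_mul_right h2 _

lemma aux_core {A : Type*} [NormedRing A] [StarRing A] [CStarRing A] [CompleteSpace A]
    [NormedAlgebra ℝ A] [StarModule ℝ A] {a b : ℝ} (hab : a < b) (γ : ℝ → A)
    (hproj : ∀ t ∈ Set.Icc a b, star (γ t) = γ t ∧ γ t * γ t = γ t)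
    (hcont : ContinuousOn γ (Set.Icc a b)) {η : ℝ} (h0 : 0 < η) (h1 : η ≤ 1 / 2) :
    ∃ Γ : ℝ → A, PiecewiseC1On Γ a b ∧
      (∀ t ∈ Set.Icc a b, star (Γ t) = Γ t ∧ Γ t * Γ t = Γ t) ∧
      Γ a = γ a ∧ Γ b = γ b ∧ (∀ t ∈ Set.Icc a b, ‖γ t - Γ t‖ ≤ 5 * η) ∧
      eVariationOn Γ (Set.Icc a b) ≤
        ENNReal.ofReal (1 / (1 - η) ^ 2) * eVariationOn γ (Set.Icc a b) := by
  have huc := isCompact_Icc.uniformContinuousOn_of_continuous hcont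
  rw [Metric.uniformContinuousOn_iff] at huc
  obtain ⟨δ, hδ, huc⟩ := huc η h0
  obtain ⟨N, hN⟩ := exists_nat_gt ((b - a) / δ)
  have hNpos : (0 : ℝ) < N := lt_trans (div_pos (by linarith) hδ) hN
  obtain ⟨h, hh⟩ : ∃ h, h = (b - a) / N := ⟨_, rfl⟩
  have hhpos : 0 < h := by rw [hh]; exact div_pos (by linarith) hNpos
  have hNh : N * h = b - a := by rw [hh]; field_simp
  have hhδ : h < δ := by
    rw [hh, div_lt_iff₀ hNpos]; rw [div_lt_iff₀ hδ] at hN; linarith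
  obtain ⟨t, ht⟩ : ∃ t : ℕ → ℝ, t = fun i : ℕ => min (a + i * h) b := ⟨_, rfl⟩
  have htle : ∀ i : ℕ, i ≤ N → t i = a + i * h := by
    intro i hi
    rw [ht]; apply min_eq_left
    have : (i : ℝ) ≤ N := by exact_mod_cast hi
    nlinarith
  have htmono : Monotone t := by
    intro i j hij
    rw [ht]
    have : (i : ℝ) ≤ j := by exact_mod_cast hij
    exact min_le_min_right _ (by nlinarith)
  have htmem : ∀ i, t i ∈ Set.Icc a b := by
    intro i
    rw [ht]
    exact ⟨le_min (by have : (0 : ℝ) ≤ i := i.cast_nonneg; nlinarith) hab.le, min_le_right _ _⟩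
  have ht0 : t 0 = a := by rw [htle 0 (by omega)]; simp
  have htN : t N = b := by rw [htle N le_rfl, hNh]; ring
  have htstep : ∀ i, t (i + 1) ≤ t i + h := by
    intro i
    rw [ht]
    simp only []
    rw [← min_add_add_right]
    apply min_le_min
    · push_cast; linarith
    · linarith
  have hclose : ∀ i, ‖γ (t (i + 1)) - γ (t i)‖ ≤ η := by
    intro i
    rw [← dist_eq_norm]
    apply (huc _ (htmem _) _ (htmem _) _).le
    rw [Real.dist_eq, abs_of_nonneg (by linarith [htmono (Nat.le_succ i)])]
    linarith [htstep i]
  have hη1 : η < 1 := by linarith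
  have hpath := fun i => auxPath_props (hproj _ (htmem i)).1 (hproj _ (htmem i)).2
    (hproj _ (htmem (i + 1))).1 (hproj _ (htmem (i + 1))).2 hη1 (hclose i)
  obtain ⟨φ, hφ⟩ : ∃ φ : ℕ → ℝ → A, φ = fun i => auxPath (γ (t i)) (γ (t (i + 1))) := ⟨_, rfl⟩
  have hpath' : ∀ i, φ i 0 = γ (t i) ∧ φ i 1 = γ (t (i + 1)) ∧
      ContDiffOn ℝ 1 (φ i) (Set.Icc 0 1) ∧
      (∀ s ∈ Set.Icc (0 : ℝ) 1, star (φ i s) = φ i s ∧ φ i s * φ i s = φ i s) ∧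
      (∀ s ∈ Set.Icc (0 : ℝ) 1, ∀ r ∈ Set.Icc (0 : ℝ) 1,
        ‖φ i s - φ i r‖ ≤ ‖γ (t (i + 1)) - γ (t i)‖ / (1 - η) ^ 2 * |s - r|) := by
    rw [hφ]; exact hpath
  clear hpath hφ
  obtain ⟨Γ, hΓ⟩ : ∃ Γ : ℝ → A, Γ = fun x => φ ⌊(x - a) / h⌋₊ ((x - a) / h - ⌊(x - a) / h⌋₊) :=
    ⟨_, rfl⟩
  have hst : ∀ i < N, t (i + 1) = t i + h := by
    intro i hi
    rw [htle i hi.le, htle (i + 1) hi]; push_cast; ring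
  have hmem : ∀ i < N, ∀ x ∈ Set.Icc (t i) (t (i + 1)), (x - t i) / h ∈ Set.Icc (0 : ℝ) 1 := by
    intro i hi x hx
    have := hst i hi
    constructor
    · exact div_nonneg (by linarith [hx.1]) hhpos.le
    · rw [div_le_one hhpos]; linarith [hx.2]
  have hkey : ∀ i < N, ∀ x ∈ Set.Icc (t i) (t (i + 1)), Γ x = φ i ((x - t i) / h) := by
    intro i hi x hx
    have e : (x - t i) / h = (x - a) / h - i := by
      rw [htle i hi.le]; field_simp; ring
    have hm := hmem i hi x hx
    rw [e] at hm
    rw [hΓ, e]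
    simp only []
    rcases lt_or_eq_of_le hm.2 with hlt | heq
    · have : ⌊(x - a) / h⌋₊ = i := by
        rw [Nat.floor_eq_iff (by have : (0 : ℝ) ≤ i := i.cast_nonneg
                                 linarith [hm.1])]
        exact ⟨by linarith [hm.1], by linarith⟩
      rw [this]
    · have e2 : (x - a) / h = ((i + 1 : ℕ) : ℝ) := by push_cast; linarith
      rw [heq, e2, Nat.floor_natCast, sub_self, (hpath' (i + 1)).1, (hpath' i).2.1]
  have hcover : ∀ x ∈ Set.Icc a b, ∃ i < N, x ∈ Set.Icc (t i) (t (i + 1)) := by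
    intro x hx
    have hN0 : 0 < N := by exact_mod_cast hNpos
    rcases lt_or_eq_of_le hx.2 with hlt | heq
    · have hy : 0 ≤ (x - a) / h := div_nonneg (by linarith [hx.1]) hhpos.le
      have hyN : ⌊(x - a) / h⌋₊ < N := by
        rw [Nat.floor_lt hy, div_lt_iff₀ hhpos]; linarith
      refine ⟨_, hyN, ?_⟩
      rw [hst _ hyN, htle _ hyN.le]
      have f1 := Nat.floor_le hy
      have f2 := Nat.lt_floor_add_one ((x - a) / h)
      rw [le_div_iff₀ hhpos] at f1
      rw [div_lt_iff₀ hhpos] at f2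
      constructor <;> linarith
    · refine ⟨N - 1, by omega, ?_⟩
      rw [Nat.sub_add_cancel hN0, htN, heq]
      exact ⟨(htmem _).2, le_rfl⟩
  have hq : 0 < (1 - η) ^ 2 := by positivity
  have hlip : ∀ i < N, ∀ x ∈ Set.Icc (t i) (t (i + 1)), ∀ y ∈ Set.Icc (t i) (t (i + 1)),
      ‖Γ x - Γ y‖ ≤ ‖γ (t (i + 1)) - γ (t i)‖ / (1 - η) ^ 2 / h * |x - y| := by
    intro i hi x hx y hy
    rw [hkey i hi x hx, hkey i hi y hy]
    refine ((hpath' i).2.2.2.2 _ (hmem i hi x hx) _ (hmem i hi y hy)).trans (le_of_eq ?_)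
    have : (x - t i) / h - (y - t i) / h = (x - y) / h := by ring
    rw [this, abs_div, abs_of_pos hhpos]; ring
  have hval : ∀ i < N, Γ (t i) = γ (t i) ∧ Γ (t (i + 1)) = γ (t (i + 1)) := by
    intro i hi
    have hle := htmono (Nat.le_succ i)
    constructor
    · rw [hkey i hi _ ⟨le_rfl, hle⟩, sub_self, zero_div, (hpath' i).1]
    · rw [hkey i hi _ ⟨hle, le_rfl⟩, hst i hi, add_sub_cancel_left, div_self hhpos.ne',
        (hpath' i).2.1, hst i hi]
  have hN0 : 0 < N := by exact_mod_cast hNpos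
  refine ⟨Γ, ⟨N, t, ht0, htN, ?_, ?_⟩, ?_, ?_, ?_, ?_, ?_⟩
  · intro i hi; linarith [hst i hi]
  · intro i hi
    have hc : ContDiffOn ℝ 1 (fun x => φ i ((x - t i) / h)) (Set.Icc (t i) (t (i + 1))) := by
      apply (hpath' i).2.2.1.comp (f := fun x => (x - t i) / h)
      · fun_prop
      · exact fun x hx => hmem i hi x hx
    exact hc.congr (hkey i hi)
  · intro x hx
    obtain ⟨i, hi, hxi⟩ := hcover x hx
    rw [hkey i hi x hxi]
    exact (hpath' i).2.2.2.1 _ (hmem i hi x hxi)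
  · have := (hval 0 hN0).1
    rwa [ht0] at this
  · have := (hval (N - 1) (by omega)).2
    rwa [Nat.sub_add_cancel hN0, htN] at this
  · intro x hx
    obtain ⟨i, hi, hxi⟩ := hcover x hx
    have hle := htmono (Nat.le_succ i)
    have g1 : ‖γ x - γ (t i)‖ ≤ η := by
      rw [← dist_eq_norm]
      apply (huc _ hx _ (htmem _) _).le
      rw [Real.dist_eq, abs_of_nonneg (by linarith [hxi.1])]
      linarith [hst i hi, hxi.2]
    have g2 : ‖Γ (t i) - Γ x‖ ≤ 4 * η := by
      refine (hlip i hi _ ⟨le_rfl, hle⟩ x hxi).trans ?_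
      have e1 : |t i - x| ≤ h := by
        rw [abs_sub_comm, abs_of_nonneg (by linarith [hxi.1])]
        linarith [hst i hi, hxi.2]
      calc ‖γ (t (i + 1)) - γ (t i)‖ / (1 - η) ^ 2 / h * |t i - x|
          ≤ η / (1 - η) ^ 2 / h * h := by
            gcongr
            exact hclose i
        _ = η / (1 - η) ^ 2 := by field_simp
        _ ≤ 4 * η := by
            rw [div_le_iff₀ hq]
            have : 1 / 4 ≤ (1 - η) ^ 2 := by nlinarith
            nlinarith
    calc ‖γ x - Γ x‖ = ‖(γ x - γ (t i)) + (Γ (t i) - Γ x)‖ := by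
          rw [(hval i hi).1]; congr 1; abel
      _ ≤ η + 4 * η := (norm_add_le _ _).trans (add_le_add g1 g2)
      _ = 5 * η := by ring
  · have hs := eVariationOn.sum' Γ htmono (n := N)
    rw [ht0, htN] at hs
    rw [← hs]
    calc ∑ i ∈ Finset.range N, eVariationOn Γ (Set.Icc (t i) (t (i + 1)))
        ≤ ∑ i ∈ Finset.range N, ENNReal.ofReal (1 / (1 - η) ^ 2) *
            edist (γ (t (i + 1))) (γ (t i)) := by
          apply Finset.sum_le_sum
          intro i hi
          rw [Finset.mem_range] at hi
          refine (aux_evar_lip Γ (by positivity) (htmono (Nat.le_succ i)) (hlip i hi)).trans ?_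
          rw [edist_dist, dist_eq_norm, ← ENNReal.ofReal_mul (by positivity)]
          apply ENNReal.ofReal_le_ofReal
          apply le_of_eq
          rw [hst i hi, add_sub_cancel_left]
          field_simp
      _ = ENNReal.ofReal (1 / (1 - η) ^ 2) *
            ∑ i ∈ Finset.range N, edist (γ (t (i + 1))) (γ (t i)) := by
          rw [Finset.mul_sum]
      _ ≤ _ := by
          gcongr
          exact eVariationOn.sum_le htmono htmem

/-- Any continuous path `γ : [a,b] → 𝒫` of orthogonal projections can be
uniformly approximated by piecewise `C¹`-smooth paths of projections with the same endpoints,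
whose lengths (total variations) converge to the length of `γ` in `[0,∞]`. -/
theorem approx_by_piecewise_smooth {H : Type*} [NormedAddCommGroup H] [InnerProductSpace ℂ H]
    [CompleteSpace H] [TopologicalSpace.SeparableSpace H]
    (a b : ℝ) (hab : a ≤ b) (γ : ℝ → (H →L[ℂ] H))
    (hproj : ∀ t ∈ Set.Icc a b, IsOrthogonalProjection (γ t))
    (hcont : ContinuousOn γ (Set.Icc a b)) :
    ∃ Γ : ℕ → ℝ → (H →L[ℂ] H),
      (∀ n, PiecewiseC1On (Γ n) a b ∧
        (∀ t ∈ Set.Icc a b, IsOrthogonalProjection (Γ n t)) ∧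
        Γ n a = γ a ∧ Γ n b = γ b) ∧
      TendstoUniformlyOn (fun n => Γ n) γ Filter.atTop (Set.Icc a b) ∧
      Filter.Tendsto (fun n => eVariationOn (Γ n) (Set.Icc a b)) Filter.atTop
        (nhds (eVariationOn γ (Set.Icc a b))) := by
  rcases hab.eq_or_lt with rfl | hlt
  · refine ⟨fun _ => γ, fun n => ⟨⟨0, fun _ => a, rfl, rfl, by simp, by simp⟩, hproj, rfl, rfl⟩,
      ?_, tendsto_const_nhds⟩
    rw [Metric.tendstoUniformlyOn_iff]
    intro ε hε
    exact Filter.Eventually.of_forall fun n x _ => by simpa using hε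
  have hη0 : ∀ n : ℕ, (0 : ℝ) < 1 / ((n : ℝ) + 1) * (1 / 2) := fun n => by positivity
  have hη1 : ∀ n : ℕ, 1 / ((n : ℝ) + 1) * (1 / 2) ≤ (1 / 2 : ℝ) := fun n => by
    have : 1 / ((n : ℝ) + 1) ≤ 1 := by
      rw [div_le_one (by positivity)]
      have : (0 : ℝ) ≤ n := n.cast_nonneg
      linarith
    linarith
  have hlim : Filter.Tendsto (fun n : ℕ => 1 / ((n : ℝ) + 1) * (1 / 2)) Filter.atTop (nhds 0) := by
    simpa using (tendsto_one_div_add_atTop_nhds_zero_nat (𝕜 := ℝ)).mul_const (1 / 2 : ℝ)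
  have hcore := fun n : ℕ => aux_core hlt γ
    (fun t ht => ⟨(hproj t ht).1.star_eq, (hproj t ht).2⟩) hcont (hη0 n) (hη1 n)
  choose Γ hP hpr hA hB hd hv using hcore
  have hunif : TendstoUniformlyOn (fun n => Γ n) γ Filter.atTop (Set.Icc a b) := by
    rw [Metric.tendstoUniformlyOn_iff]
    intro ε hε
    have h5 : Filter.Tendsto (fun n : ℕ => 5 * (1 / ((n : ℝ) + 1) * (1 / 2)))
        Filter.atTop (nhds 0) := by simpa using hlim.const_mul 5
    filter_upwards [h5.eventually (gt_mem_nhds hε)] with n hn x hx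
    rw [dist_eq_norm]
    exact (hd n x hx).trans_lt hn
  refine ⟨Γ, fun n => ⟨hP n, fun t ht => ⟨(hpr n t ht).1, (hpr n t ht).2⟩, hA n, hB n⟩,
    hunif, ?_⟩
  rw [tendsto_order]
  constructor
  · intro v hvlt
    exact eVariationOn.lowerSemicontinuous_aux (fun x hx => hunif.tendsto_at hx) hvlt
  · intro v hvlt
    have hc : Filter.Tendsto
        (fun n : ℕ => ENNReal.ofReal (1 / (1 - 1 / ((n : ℝ) + 1) * (1 / 2)) ^ 2) *
          eVariationOn γ (Set.Icc a b)) Filter.atTop (nhds (1 * eVariationOn γ (Set.Icc a b))) := by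
      apply ENNReal.Tendsto.mul_const _ (Or.inl one_ne_zero)
      rw [← ENNReal.ofReal_one]
      apply ENNReal.tendsto_ofReal
      have h2 : Filter.Tendsto (fun n : ℕ => (1 - 1 / ((n : ℝ) + 1) * (1 / 2)) ^ 2) Filter.atTop
          (nhds ((1 - 0) ^ 2)) := (tendsto_const_nhds.sub hlim).pow 2
      have h3 := (tendsto_const_nhds (x := (1 : ℝ))).div h2 (by norm_num)
      have e : (1 : ℝ) / (1 - 0) ^ 2 = 1 := by norm_num
      rw [e] at h3
      exact h3
    rw [one_mul] at hc
    filter_upwards [hc.eventually (gt_mem_nhds hvlt)] with n hn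
    exact (hv n).trans_lt hn
end

section
/- The metric space (𝒫, ρ) is (π/2)-geodesic: for any two orthogonal projections P, Q on H with ρ(P,Q) < π/2 there exists a geodesic path joining them, i.e., a map γ : [0, ρ(P,Q)] → 𝒫 with γ(0) = P, γ(ρ(P,Q)) = Q, and ρ(γ(s), γ(t)) = |s − t| for all s, t ∈ [0, ρ(P,Q)]. -/
open ContinuousLinearMap
open scoped ENNReal

/-- The length (inner) metric `ρ` on the set of orthogonal projections: the infimum of the
lengths (total variations) of continuous paths of orthogonal projections joining `P` to `Q`
(parametrized by `[0,1]`), with value `∞` if there is no such path. -/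
noncomputable def projLengthMetric {H : Type*} [NormedAddCommGroup H] [InnerProductSpace ℂ H]
    [CompleteSpace H] (P Q : H →L[ℂ] H) : ℝ≥0∞ :=
  ⨅ (γ : ℝ → (H →L[ℂ] H)) (_ : ContinuousOn γ (Set.Icc (0:ℝ) 1))
    (_ : ∀ t ∈ Set.Icc (0:ℝ) 1, IsOrthogonalProjection (γ t))
    (_ : γ 0 = P) (_ : γ 1 = Q), eVariationOn γ (Set.Icc (0:ℝ) 1)


theorem sym_mul_unitary {A : Type*} [CStarAlgebra A] {S T : A} (hS : IsSelfAdjoint S)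
    (hT : IsSelfAdjoint T) (hS2 : S * S = 1) (hT2 : T * T = 1) : T * S ∈ unitary A := by
  rw [Unitary.mem_iff, star_mul, hS.star_eq, hT.star_eq]
  constructor
  · rw [mul_assoc, ← mul_assoc T T S, hT2, one_mul, hS2]
  · rw [mul_assoc, ← mul_assoc S S T, hS2, one_mul, hT2]

theorem sym_norm_mul_sub {A : Type*} [CStarAlgebra A] {S T : A} (hS : IsSelfAdjoint S)
    (hS2 : S * S = 1) : ‖T * S - 1‖ = ‖T - S‖ := by
  have hu : S ∈ unitary A := by
    rw [Unitary.mem_iff, hS.star_eq]; exact ⟨hS2, hS2⟩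
  rw [← hS2, ← sub_mul, CStarRing.norm_mul_mem_unitary _ hu]

open selfAdjoint Unitary in
theorem sym_path {A : Type*} [CStarAlgebra A] {S T : A} (hS : IsSelfAdjoint S)
    (hT : IsSelfAdjoint T) (hS2 : S * S = 1) (hT2 : T * T = 1) (hlt : ‖T - S‖ < 2) :
    ∃ W : ℝ → A, W 0 = S ∧ W (Real.arcsin (‖T - S‖ / 2)) = T ∧
      (∀ t, IsSelfAdjoint (W t) ∧ W t * W t = 1) ∧
      ∀ s ∈ Set.Icc (0:ℝ) (Real.arcsin (‖T - S‖ / 2)),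
        ∀ t ∈ Set.Icc (0:ℝ) (Real.arcsin (‖T - S‖ / 2)), ‖W s - W t‖ ≤ 2 * |s - t| := by
  let +nondep : NormedAlgebra ℚ A := .restrictScalars ℚ ℂ A
  have hSu : S ∈ unitary A := by
    rw [Unitary.mem_iff, hS.star_eq]; exact ⟨hS2, hS2⟩
  let u : unitary A := ⟨T * S, sym_mul_unitary hS hT hS2 hT2⟩
  have hun : ‖(u - 1 : A)‖ = ‖T - S‖ := sym_norm_mul_sub hS hS2
  have hu : ‖(u - 1 : A)‖ < 2 := by rw [hun]; exact hlt
  set a := argSelfAdjoint u with ha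
  set θ := Real.arcsin (‖T - S‖ / 2) with hθ
  have hexp : expUnitary a = u := expUnitary_argSelfAdjoint hu
  have hle : ‖a‖ ≤ Real.pi := norm_argSelfAdjoint_le_pi u
  have hcos : 2 * (1 - Real.cos ‖a‖) = ‖T - S‖ ^ 2 := by
    rw [← hun]; exact two_mul_one_sub_cos_norm_argSelfAdjoint hu
  have hapi : ‖a‖ < Real.pi := by
    refine lt_of_le_of_ne hle fun h => ?_
    rw [h, Real.cos_pi] at hcos
    nlinarith [norm_nonneg (T - S)]
  have haθ : ‖a‖ = 2 * θ := by
    have h1 : Real.sin (‖a‖ / 2) = ‖T - S‖ / 2 := by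
      have h2 : 2 * (1 - Real.cos ‖a‖) = 4 * Real.sin (‖a‖ / 2) ^ 2 := by
        have hh := Real.cos_sq (‖a‖ / 2)
        rw [show 2 * (‖a‖ / 2) = ‖a‖ by ring] at hh
        have := Real.sin_sq_add_cos_sq (‖a‖ / 2)
        linarith
      have h3 : 0 ≤ Real.sin (‖a‖ / 2) :=
        Real.sin_nonneg_of_nonneg_of_le_pi (by positivity) (by linarith [norm_nonneg a])
      have h4 : (Real.sin (‖a‖ / 2)) ^ 2 = (‖T - S‖ / 2) ^ 2 := by linarith
      exact (sq_eq_sq₀ h3 (by positivity)).1 h4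
    have : θ = ‖a‖ / 2 := by
      rw [hθ, ← h1, Real.arcsin_sin] <;> linarith [norm_nonneg a, Real.pi_pos]
    linarith
  let Su : Aˣ := ⟨S, S, hS2, hS2⟩
  -- conjugation by S
  have hconj : ∀ x : A, S * NormedSpace.exp x * S = NormedSpace.exp (S * x * S) := fun x =>
    (NormedSpace.exp_units_conj Su x).symm
  have hanti : S * (a : A) * S = - (a : A) := by
    have hbs : IsSelfAdjoint (-(S * (a : A) * S)) := by
      refine IsSelfAdjoint.neg ?_
      have := a.2.star_eq
      rw [isSelfAdjoint_iff, star_mul, star_mul, hS.star_eq, this, mul_assoc]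
    let b : selfAdjoint A := ⟨-(S * (a : A) * S), hbs⟩
    have hbn : ‖b‖ = ‖a‖ := by
      change ‖-(S * (a : A) * S)‖ = ‖(a : A)‖
      rw [norm_neg, CStarRing.norm_mul_mem_unitary _ hSu, CStarRing.norm_mem_unitary_mul _ hSu]
    have hb : expUnitary b = expUnitary a := by
      have h1 : star (expUnitary a : A) = NormedSpace.exp (-(Complex.I • (a : A))) := by
        rw [expUnitary_coe, NormedSpace.star_exp, star_smul, a.2.star_eq]
        simp
      ext
      rw [expUnitary_coe]
      have h2 : Complex.I • (b : A) = S * (-(Complex.I • (a : A))) * S := by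
        change Complex.I • (-(S * (a : A) * S)) = _
        simp
      rw [h2, ← hconj, ← h1, hexp]
      change S * star (T * S) * S = T * S
      rw [star_mul, hS.star_eq, hT.star_eq, ← mul_assoc, hS2, one_mul]
    have : b = a := by
      rw [← argSelfAdjoint_expUnitary hapi, ← hb, argSelfAdjoint_expUnitary (hbn ▸ hapi)]
    have := congrArg Subtype.val this
    change -(S * (a : A) * S) = (a : A) at this
    rw [← this, neg_neg, ← this, this, this]
  have hstar : ∀ r : ℝ, star (expUnitary (r • a) : A) = S * (expUnitary (r • a) : A) * S := by
    intro r
    rw [expUnitary_coe, hconj, NormedSpace.star_exp, star_smul, (r • a).2.star_eq]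
    congr 1
    simp [hanti]
  refine ⟨fun t => (expUnitary ((t / θ) • a) : A) * S, ?_, ?_, ?_, ?_⟩
  · simp
  · by_cases h0 : θ = 0
    · have : a = 0 := by rw [← norm_eq_zero, haθ, h0, mul_zero]
      have h1 : (u : A) = 1 := by rw [← hexp, this]; simp
      have h1 : T * S = 1 := h1
      have : T = S := by
        calc T = T * S * S := by rw [mul_assoc, hS2, mul_one]
          _ = S := by rw [h1, one_mul]
      simp [h0, this]
    · simp only [div_self h0, one_smul, hexp]
      change T * S * S = T
      rw [mul_assoc, hS2, mul_one]
  · intro t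
    have h := hstar (t / θ)
    have hm := (expUnitary ((t / θ) • a)).2
    rw [Unitary.mem_iff] at hm
    set e : A := (expUnitary ((t / θ) • a) : A)
    constructor
    · rw [isSelfAdjoint_iff, star_mul, hS.star_eq, h, ← mul_assoc, ← mul_assoc, hS2, one_mul]
    · change e * S * (e * S) = 1
      rw [← hm.2, h]; simp only [mul_assoc]
  · intro s hs t ht
    have hadd : (expUnitary ((s / θ) • a) : A) =
        (expUnitary (((s - t) / θ) • a) : A) * (expUnitary ((t / θ) • a) : A) := by
      have hc : Commute ((((s - t) / θ) • a : selfAdjoint A) : A) (((t / θ) • a : selfAdjoint A) : A) := by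
        simp only [selfAdjoint.val_smul]
        exact ((Commute.refl (a : A)).smul_left _).smul_right _
      rw [← Submonoid.coe_mul, ← hc.expUnitary_add, ← add_smul]
      congr 4
      ring
    change ‖(expUnitary ((s / θ) • a) : A) * S - (expUnitary ((t / θ) • a) : A) * S‖ ≤ _
    rw [← sub_mul, CStarRing.norm_mul_mem_unitary _ hSu, hadd]
    nth_rewrite 2 [← one_mul (expUnitary ((t / θ) • a) : A)]
    rw [← sub_mul, CStarRing.norm_mul_mem_unitary _ (expUnitary ((t / θ) • a)).2]
    have hθ0 : 0 ≤ θ := by linarith [norm_nonneg a]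
    have hn : ‖((s - t) / θ) • a‖ ≤ 2 * |s - t| := by
      have : ‖((s - t) / θ) • a‖ = |(s - t) / θ| * ‖a‖ := by
        change ‖((s - t) / θ) • (a : A)‖ = |(s - t) / θ| * ‖(a : A)‖
        rw [norm_smul, Real.norm_eq_abs]
      rw [this, haθ, abs_div, abs_of_nonneg hθ0]
      by_cases h0 : θ = 0
      · simp [h0]
      · apply le_of_eq; field_simp
    have hst : |s - t| ≤ θ := by rw [abs_le]; constructor <;> linarith [hs.1, hs.2, ht.1, ht.2]
    have hsq := norm_sq_expUnitary_sub_one (x := ((s - t) / θ) • a) (by linarith)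
    have hcb := Real.one_sub_sq_div_two_le_cos (x := ‖((s - t) / θ) • a‖)
    have hfin : ‖(expUnitary (((s - t) / θ) • a) - 1 : A)‖ ^ 2 ≤ (2 * |s - t|) ^ 2 := by
      rw [hsq]
      have : ‖((s - t) / θ) • a‖ ^ 2 ≤ (2 * |s - t|) ^ 2 := by gcongr
      linarith
    exact (sq_le_sq₀ (norm_nonneg _) (by positivity)).1 hfin

/-- chord to angle -/
theorem chord_angle {V : Type*} [NormedAddCommGroup V] [InnerProductSpace ℝ V] {x y : V}
    (hx : ‖x‖ = 1) (hy : ‖y‖ = 1) :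
    ‖x - y‖ = 2 * Real.sin (InnerProductGeometry.angle x y / 2) := by
  have h1 : ‖x - y‖ ^ 2 = 2 - 2 * Real.cos (InnerProductGeometry.angle x y) := by
    rw [norm_sub_sq_real, hx, hy, InnerProductGeometry.inner_eq_cos_angle_of_norm_eq_one hx hy]
    ring
  have h0 := InnerProductGeometry.angle_nonneg x y
  have hpi := InnerProductGeometry.angle_le_pi x y
  set a := InnerProductGeometry.angle x y
  have h3 : 0 ≤ Real.sin (a / 2) :=
    Real.sin_nonneg_of_nonneg_of_le_pi (by positivity) (by linarith)
  have hh := Real.cos_sq (a / 2)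
  rw [show 2 * (a / 2) = a by ring] at hh
  have := Real.sin_sq_add_cos_sq (a / 2)
  exact (sq_eq_sq₀ (norm_nonneg _) (by positivity)).1 (by linarith)

theorem angle_eq_arcsin {V : Type*} [NormedAddCommGroup V] [InnerProductSpace ℝ V] {x y : V}
    (hx : ‖x‖ = 1) (hy : ‖y‖ = 1) :
    InnerProductGeometry.angle x y = 2 * Real.arcsin (‖x - y‖ / 2) := by
  have h0 := InnerProductGeometry.angle_nonneg x y
  have hpi := InnerProductGeometry.angle_le_pi x y
  rw [chord_angle hx hy, mul_div_cancel_left₀ _ (two_ne_zero), Real.arcsin_sin] <;> linarith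

/-- Triangle inequality for unitaries. -/
theorem unitary_arcsin_triangle {H : Type*} [NormedAddCommGroup H] [InnerProductSpace ℂ H]
    [CompleteSpace H] (A B C : H →L[ℂ] H) (hA : ∀ x, ‖A x‖ = ‖x‖) (hB : ∀ x, ‖B x‖ = ‖x‖)
    (hC : ∀ x, ‖C x‖ = ‖x‖) :
    Real.arcsin (‖A - C‖ / 2) ≤ Real.arcsin (‖A - B‖ / 2) + Real.arcsin (‖B - C‖ / 2) := by
  let : InnerProductSpace ℝ H := InnerProductSpace.complexToReal
  set α := Real.arcsin (‖A - B‖ / 2)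
  set β := Real.arcsin (‖B - C‖ / 2)
  have hα : 0 ≤ α := Real.arcsin_nonneg.2 (by positivity)
  have hβ : 0 ≤ β := Real.arcsin_nonneg.2 (by positivity)
  by_cases hab : Real.pi / 2 ≤ α + β
  · exact (Real.arcsin_le_pi_div_two _).trans hab
  push Not at hab
  have key : ‖A - C‖ ≤ 2 * Real.sin (α + β) := by
    have hs : 0 ≤ Real.sin (α + β) :=
      Real.sin_nonneg_of_nonneg_of_le_pi (by positivity) (by linarith [Real.pi_pos])
    refine ContinuousLinearMap.opNorm_le_of_unit_norm (by positivity) fun x hx => ?_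
    have h1 := (hA x).trans hx
    have h2 := (hB x).trans hx
    have h3 := (hC x).trans hx
    have t := InnerProductGeometry.angle_le_angle_add_angle (A x) (B x) (C x)
    have e1 : InnerProductGeometry.angle (A x) (B x) ≤ 2 * α := by
      rw [angle_eq_arcsin h1 h2]
      have := (A - B).le_opNorm x
      rw [hx, mul_one] at this
      have := Real.monotone_arcsin (show ‖A x - B x‖ / 2 ≤ ‖A - B‖ / 2 by
        rw [← sub_apply]; linarith)
      linarith
    have e2 : InnerProductGeometry.angle (B x) (C x) ≤ 2 * β := by
      rw [angle_eq_arcsin h2 h3]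
      have := (B - C).le_opNorm x
      rw [hx, mul_one] at this
      have := Real.monotone_arcsin (show ‖B x - C x‖ / 2 ≤ ‖B - C‖ / 2 by
        rw [← sub_apply]; linarith)
      linarith
    rw [sub_apply, chord_angle h1 h3]
    have h0 := InnerProductGeometry.angle_nonneg (A x) (C x)
    have := Real.sin_le_sin_of_le_of_le_pi_div_two (x := InnerProductGeometry.angle (A x) (C x) / 2)
      (y := α + β) (by linarith [Real.pi_pos]) hab.le (by linarith)
    linarith
  calc Real.arcsin (‖A - C‖ / 2) ≤ Real.arcsin (Real.sin (α + β)) :=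
        Real.monotone_arcsin (by linarith)
    _ = α + β := Real.arcsin_sin (by linarith [Real.pi_pos]) hab.le

theorem arcsin_le_mul {c : ℝ} (hc : 1 < c) :
    ∃ δ > 0, ∀ x : ℝ, 0 ≤ x → x < δ → Real.arcsin x ≤ c * x := by
  have h := Real.hasDerivAt_arcsin (x := 0) (by norm_num) (by norm_num)
  rw [hasDerivAt_iff_isLittleO] at h
  have h2 := h.def (show 0 < c - 1 by linarith)
  obtain ⟨δ, hδ, h3⟩ := Metric.eventually_nhds_iff.1 h2
  refine ⟨δ, hδ, fun x hx hxd => ?_⟩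
  have := h3 (y := x) (by simpa [abs_of_nonneg hx] using hxd)
  simp [abs_of_nonneg hx] at this
  have := (abs_le.1 this).2
  linarith

theorem variation_lower {E : Type*} [NormedAddCommGroup E] (S : Set E)
    (htri : ∀ x ∈ S, ∀ y ∈ S, ∀ z ∈ S,
      Real.arcsin ‖x - z‖ ≤ Real.arcsin ‖x - y‖ + Real.arcsin ‖y - z‖)
    (γ : ℝ → E) (hγ : ContinuousOn γ (Set.Icc (0:ℝ) 1)) (hS : ∀ t ∈ Set.Icc (0:ℝ) 1, γ t ∈ S) :
    ENNReal.ofReal (Real.arcsin ‖γ 0 - γ 1‖) ≤ eVariationOn γ (Set.Icc (0:ℝ) 1) := by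
  by_cases htop : eVariationOn γ (Set.Icc (0:ℝ) 1) = ⊤
  · rw [htop]; exact le_top
  rw [← ENNReal.ofReal_toReal htop]
  apply ENNReal.ofReal_le_ofReal
  set L := (eVariationOn γ (Set.Icc (0:ℝ) 1)).toReal with hL
  have main : ∀ c : ℝ, 1 < c → Real.arcsin ‖γ 0 - γ 1‖ ≤ c * L := by
    intro c hc
    obtain ⟨δ, hδ, hd⟩ := arcsin_le_mul hc
    have huc := isCompact_Icc.uniformContinuousOn_of_continuous hγ
    obtain ⟨η, hη, hu⟩ := Metric.uniformContinuousOn_iff.1 huc δ hδ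
    obtain ⟨n, hn⟩ := exists_nat_gt (1 / η)
    have hn0 : (0:ℝ) < n := lt_trans (by positivity) hn
    let t : ℕ → ℝ := fun i => min (i / n) 1
    have ht : ∀ i, t i ∈ Set.Icc (0:ℝ) 1 := fun i =>
      ⟨le_min (by positivity) zero_le_one, min_le_right _ _⟩
    have hmono : Monotone t := by
      intro i j hij
      exact min_le_min_right _ (by gcongr)
    have hstep : ∀ i, dist (t (i+1)) (t i) < η := by
      intro i
      have h1 : dist (t (i+1)) (t i) ≤ |((i+1 : ℕ) / n : ℝ) - i / n| := by
        have := abs_min_sub_min_le_max ((i+1 : ℕ) / n : ℝ) 1 (i / n : ℝ) 1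
        simpa [Real.dist_eq, t] using this
      have h2 : ((i+1 : ℕ) / n : ℝ) - i / n = 1 / n := by push_cast; ring
      rw [h2, abs_of_pos (by positivity)] at h1
      refine h1.trans_lt ?_
      rw [div_lt_iff₀ hη] at hn
      rw [div_lt_iff₀ hn0]; linarith
    have hind : ∀ k, Real.arcsin ‖γ (t 0) - γ (t k)‖ ≤
        ∑ i ∈ Finset.range k, c * ‖γ (t (i+1)) - γ (t i)‖ := by
      intro k
      induction k with
      | zero => simp
      | succ k ih =>
        rw [Finset.sum_range_succ]
        have h1 := htri _ (hS _ (ht 0)) _ (hS _ (ht k)) _ (hS _ (ht (k+1)))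
        have h2 := hu _ (ht (k+1)) _ (ht k) (hstep k)
        rw [dist_eq_norm] at h2
        have h3 := hd _ (norm_nonneg _) h2
        rw [norm_sub_rev (γ (t k))] at h1
        linarith
    have hsum : ∑ i ∈ Finset.range n, ‖γ (t (i+1)) - γ (t i)‖ ≤ L := by
      have h := eVariationOn.sum_le (f := γ) (s := Set.Icc (0:ℝ) 1) (n := n) hmono ht
      have h2 := ENNReal.toReal_mono htop h
      rw [ENNReal.toReal_sum (by simp [edist_ne_top])] at h2
      simpa [edist_dist, dist_eq_norm] using h2
    have h := hind n
    rw [← Finset.mul_sum] at h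
    have h0 : t 0 = 0 := by simp [t]
    have h1 : t n = 1 := by simp [t, div_self hn0.ne']
    rw [h0, h1] at h
    exact h.trans (by gcongr)
  have h0 : 0 ≤ L := ENNReal.toReal_nonneg
  refine le_of_forall_pos_le_add fun ε hε => ?_
  have := main (1 + ε / (L + 1)) (by have : 0 < ε / (L + 1) := by positivity
                                     linarith)
  have h2 : ε / (L + 1) * L ≤ ε := by
    rw [div_mul_eq_mul_div, div_le_iff₀ (by positivity)]; nlinarith
  linarith

theorem proj_sym {H : Type*} [NormedAddCommGroup H] [InnerProductSpace ℂ H]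
    [CompleteSpace H] {P : H →L[ℂ] H} (hP : IsOrthogonalProjection P) :
    IsSelfAdjoint ((2:ℝ) • P - 1) ∧ ((2:ℝ) • P - 1) * ((2:ℝ) • P - 1) = 1 := by
  constructor
  · exact (IsSelfAdjoint.smul (IsSelfAdjoint.all (2:ℝ)) hP.1).sub (IsSelfAdjoint.one _)
  · simp only [mul_sub, sub_mul, smul_mul_assoc, mul_smul_comm, hP.2, mul_one, one_mul]
    module

theorem sym_proj {H : Type*} [NormedAddCommGroup H] [InnerProductSpace ℂ H]
    [CompleteSpace H] {W : H →L[ℂ] H} (h : IsSelfAdjoint W) (h2 : W * W = 1) :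
    IsOrthogonalProjection ((1/2:ℝ) • (1 + W)) := by
  constructor
  · exact IsSelfAdjoint.smul (IsSelfAdjoint.all (1/2:ℝ)) ((IsSelfAdjoint.one _).add h)
  · simp only [mul_add, add_mul, smul_mul_assoc, mul_smul_comm, h2, mul_one, one_mul]
    module

theorem sym_isometry {H : Type*} [NormedAddCommGroup H] [InnerProductSpace ℂ H]
    [CompleteSpace H] {W : H →L[ℂ] H} (h : IsSelfAdjoint W) (h2 : W * W = 1) (x : H) :
    ‖W x‖ = ‖x‖ := by
  have h3 : inner ℂ (W x) (W x) = inner ℂ x x := by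
    rw [← ContinuousLinearMap.adjoint_inner_right, ← ContinuousLinearMap.star_eq_adjoint, h.star_eq]
    change inner ℂ x ((W * W) x) = _
    rw [h2]; rfl
  rw [inner_self_eq_norm_sq_to_K, inner_self_eq_norm_sq_to_K] at h3
  have h4 : ‖W x‖ ^ 2 = ‖x‖ ^ 2 := by exact_mod_cast h3
  exact (sq_eq_sq₀ (norm_nonneg _) (norm_nonneg _)).1 h4

theorem sym_dist {H : Type*} [NormedAddCommGroup H] [InnerProductSpace ℂ H]
    [CompleteSpace H] (P Q : H →L[ℂ] H) :
    ‖((2:ℝ) • P - 1) - ((2:ℝ) • Q - 1)‖ = 2 * ‖P - Q‖ := by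
  rw [sub_sub_sub_cancel_right, ← smul_sub, norm_smul]; simp

theorem proj_arcsin_triangle {H : Type*} [NormedAddCommGroup H] [InnerProductSpace ℂ H]
    [CompleteSpace H] {P Q R : H →L[ℂ] H} (hP : IsOrthogonalProjection P)
    (hQ : IsOrthogonalProjection Q) (hR : IsOrthogonalProjection R) :
    Real.arcsin ‖P - R‖ ≤ Real.arcsin ‖P - Q‖ + Real.arcsin ‖Q - R‖ := by
  have := unitary_arcsin_triangle _ _ _
    (sym_isometry (proj_sym hP).1 (proj_sym hP).2) (sym_isometry (proj_sym hQ).1 (proj_sym hQ).2)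
    (sym_isometry (proj_sym hR).1 (proj_sym hR).2)
  simpa only [sym_dist, mul_div_cancel_left₀ _ (two_ne_zero (α := ℝ))] using this

theorem proj_lower {H : Type*} [NormedAddCommGroup H] [InnerProductSpace ℂ H]
    [CompleteSpace H] (P Q : H →L[ℂ] H) :
    ENNReal.ofReal (Real.arcsin ‖P - Q‖) ≤ projLengthMetric P Q := by
  unfold projLengthMetric
  refine le_iInf fun γ => le_iInf fun hc => le_iInf fun hp => le_iInf fun h0 => le_iInf fun h1 => ?_
  rw [← h0, ← h1]
  exact variation_lower {P | IsOrthogonalProjection P}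
    (fun x hx y hy z hz => proj_arcsin_triangle hx hy hz) γ hc hp

theorem proj_upper {H : Type*} [NormedAddCommGroup H] [InnerProductSpace ℂ H]
    [CompleteSpace H] (γ : ℝ → (H →L[ℂ] H)) (θ : ℝ) (hγ : ∀ t, IsOrthogonalProjection (γ t))
    (hl : ∀ s ∈ Set.Icc (0:ℝ) θ, ∀ t ∈ Set.Icc (0:ℝ) θ, ‖γ s - γ t‖ ≤ |s - t|)
    (s : ℝ) (hs : s ∈ Set.Icc (0:ℝ) θ) (t : ℝ) (ht : t ∈ Set.Icc (0:ℝ) θ) :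
    projLengthMetric (γ s) (γ t) ≤ ENNReal.ofReal |s - t| := by
  let g : ℝ → (H →L[ℂ] H) := fun r => γ (s + r * (t - s))
  have hmem : ∀ r ∈ Set.Icc (0:ℝ) 1, s + r * (t - s) ∈ Set.Icc (0:ℝ) θ := by
    intro r hr
    have := (convex_Icc (0:ℝ) θ).add_smul_sub_mem hs ht hr
    simpa using this
  have hlip : LipschitzOnWith (Real.toNNReal |s - t|) g (Set.Icc (0:ℝ) 1) := by
    refine LipschitzOnWith.of_dist_le_mul fun x hx y hy => ?_
    rw [dist_eq_norm, Real.coe_toNNReal _ (abs_nonneg _), Real.dist_eq]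
    refine (hl _ (hmem x hx) _ (hmem y hy)).trans (le_of_eq ?_)
    rw [← abs_mul, ← abs_neg]
    congr 1
    ring
  have hv : eVariationOn g (Set.Icc (0:ℝ) 1) ≤ ENNReal.ofReal |s - t| := by
    have h1 := hlip.comp_eVariationOn_le (f := g) (g := (id : ℝ → ℝ)) (s := Set.Icc (0:ℝ) 1)
      (fun x hx => hx)
    have h2 : eVariationOn (id : ℝ → ℝ) (Set.Icc (0:ℝ) 1) ≤ 1 := by
      have := (monotone_id.monotoneOn (Set.Icc (0:ℝ) 1)).eVariationOn_le
        (a := 0) (b := 1) (by simp) (by simp)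
      simpa using this
    calc _ ≤ _ := h1
      _ ≤ (Real.toNNReal |s - t| : ℝ≥0∞) * 1 := by gcongr
      _ = _ := by rw [mul_one]; rfl
  refine le_trans ?_ hv
  unfold projLengthMetric
  exact iInf_le_of_le g (iInf_le_of_le hlip.continuousOn (iInf_le_of_le (fun r _ => hγ _)
    (iInf_le_of_le (by simp [g]) (iInf_le_of_le (by simp [g]) le_rfl))))

/-- The space of orthogonal projections with the length metric `ρ` is
`(π/2)`-geodesic: if `ρ(P,Q) < π/2` then there is a geodesic path joining `P` to `Q`. -/
theorem projLengthMetric_pi_div_two_geodesic {H : Type*} [NormedAddCommGroup H]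
    [InnerProductSpace ℂ H] [CompleteSpace H] [TopologicalSpace.SeparableSpace H]
    (P Q : H →L[ℂ] H)
    (hP : IsOrthogonalProjection P) (hQ : IsOrthogonalProjection Q)
    (hPQ : projLengthMetric P Q < ENNReal.ofReal (Real.pi / 2)) :
    ∃ γ : ℝ → (H →L[ℂ] H),
      γ 0 = P ∧ γ ((projLengthMetric P Q).toReal) = Q ∧
      (∀ t ∈ Set.Icc (0:ℝ) ((projLengthMetric P Q).toReal), IsOrthogonalProjection (γ t)) ∧
      ∀ s ∈ Set.Icc (0:ℝ) ((projLengthMetric P Q).toReal),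
        ∀ t ∈ Set.Icc (0:ℝ) ((projLengthMetric P Q).toReal),
          projLengthMetric (γ s) (γ t) = ENNReal.ofReal |s - t| := by
  have hlow := proj_lower P Q
  have hlt : Real.arcsin ‖P - Q‖ < Real.pi / 2 :=
    (ENNReal.ofReal_lt_ofReal_iff (by positivity)).1 (hlow.trans_lt hPQ)
  have hn : ‖P - Q‖ < 1 := Real.arcsin_lt_pi_div_two.1 hlt
  obtain ⟨W, hW0, hW1, hWs, hWl⟩ := sym_path (proj_sym hP).1 (proj_sym hQ).1 (proj_sym hP).2
    (proj_sym hQ).2 (by rw [sym_dist, norm_sub_rev]; linarith)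
  rw [sym_dist, norm_sub_rev, mul_div_cancel_left₀ _ (two_ne_zero (α := ℝ))] at hW1 hWl
  set θ := Real.arcsin ‖P - Q‖ with hθ
  have hθ0 : 0 ≤ θ := Real.arcsin_nonneg.2 (norm_nonneg _)
  let γ : ℝ → (H →L[ℂ] H) := fun t => (1/2:ℝ) • (1 + W t)
  have hγp : ∀ t, IsOrthogonalProjection (γ t) := fun t => sym_proj (hWs t).1 (hWs t).2
  have hγ0 : γ 0 = P := by simp only [γ, hW0]; module
  have hγ1 : γ θ = Q := by simp only [γ, hW1]; module
  have hγl : ∀ s ∈ Set.Icc (0:ℝ) θ, ∀ t ∈ Set.Icc (0:ℝ) θ, ‖γ s - γ t‖ ≤ |s - t| := by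
    intro s hs t ht
    have h1 : γ s - γ t = (1/2:ℝ) • (W s - W t) := by simp only [γ]; module
    have h2 := hWl s hs t ht
    rw [h1, norm_smul, Real.norm_of_nonneg (by norm_num)]
    linarith
  have hup := proj_upper γ θ hγp hγl
  have h0m : (0:ℝ) ∈ Set.Icc (0:ℝ) θ := ⟨le_rfl, hθ0⟩
  have h1m : θ ∈ Set.Icc (0:ℝ) θ := ⟨hθ0, le_rfl⟩
  have harc : ∀ s ∈ Set.Icc (0:ℝ) θ, ∀ t ∈ Set.Icc (0:ℝ) θ,
      Real.arcsin ‖γ s - γ t‖ ≤ |s - t| := fun s hs t ht =>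
    (ENNReal.ofReal_le_ofReal_iff (abs_nonneg _)).1 ((proj_lower _ _).trans (hup s hs t ht))
  have hge : ∀ s ∈ Set.Icc (0:ℝ) θ, ∀ t ∈ Set.Icc (0:ℝ) θ, s ≤ t →
      t - s ≤ Real.arcsin ‖γ s - γ t‖ := by
    intro s hs t ht hst
    have a1 := harc 0 h0m s hs
    have a2 := harc t ht θ h1m
    have b1 := proj_arcsin_triangle (hγp 0) (hγp s) (hγp θ)
    have b2 := proj_arcsin_triangle (hγp s) (hγp t) (hγp θ)
    rw [zero_sub, abs_neg, abs_of_nonneg hs.1] at a1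
    rw [abs_sub_comm, abs_of_nonneg (sub_nonneg.2 ht.2)] at a2
    have c : Real.arcsin ‖γ 0 - γ θ‖ = θ := by rw [hγ0, hγ1]
    linarith
  have heq : ∀ s ∈ Set.Icc (0:ℝ) θ, ∀ t ∈ Set.Icc (0:ℝ) θ,
      projLengthMetric (γ s) (γ t) = ENNReal.ofReal |s - t| := by
    intro s hs t ht
    refine le_antisymm (hup s hs t ht) (le_trans (ENNReal.ofReal_le_ofReal ?_) (proj_lower _ _))
    rcases le_total s t with h | h
    · rw [abs_sub_comm, abs_of_nonneg (sub_nonneg.2 h)]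
      exact hge s hs t ht h
    · rw [abs_of_nonneg (sub_nonneg.2 h), norm_sub_rev]
      exact hge t ht s hs h
  have hρ : (projLengthMetric P Q).toReal = θ := by
    have := heq 0 h0m θ h1m
    rw [hγ0, hγ1, zero_sub, abs_neg, abs_of_nonneg hθ0] at this
    rw [this, ENNReal.toReal_ofReal hθ0]
  rw [hρ]
  exact ⟨γ, hγ0, hγ1, fun t _ => hγp t, heq⟩
end

section
/- For any two orthogonal projections P, Q on H, the length metric equals the Riemannian pseudometric: ρ(P,Q) = inf { ∫_a^b ‖γ'(t)‖ dt : γ : [a,b] → 𝒫 a piecewise C¹-smooth path with γ(a) = P and γ(b) = Q }, where the infimum of the empty set is ∞. -/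
open ContinuousLinearMap
open scoped ENNReal

section Helpers

open MeasureTheory Set

theorem pw_facts {E : Type*} [NormedAddCommGroup E] [NormedSpace ℝ E] (γ : ℝ → E) (t : ℕ → ℝ) (n : ℕ)
   (h1 : ∀ i < n, t i < t (i + 1)) (h2 : ∀ i < n, ContDiffOn ℝ 1 γ (Set.Icc (t i) (t (i + 1)))) :
   t 0 ≤ t n ∧ ContinuousOn γ (Icc (t 0) (t n)) ∧ IntervalIntegrable (deriv γ) volume (t 0) (t n) ∧
    ∀ x ∈ Ioo (t 0) (t n) \ range t, HasDerivAt γ (deriv γ x) x := by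
  induction n with
  | zero => simp
  | succ k ih =>
    obtain ⟨i1, i2, i3, i4⟩ := ih (fun i hi => h1 i (by omega)) (fun i hi => h2 i (by omega))
    have hk := h1 k (by omega)
    have hc := h2 k (by omega)
    have hd : ∀ x ∈ Ioo (t k) (t (k+1)), HasDerivAt γ (deriv γ x) x := by
      intro x hx
      exact ((hc.contDiffAt (Icc_mem_nhds hx.1 hx.2)).differentiableAt (by simp)).hasDerivAt
    refine ⟨i1.trans hk.le, ?_, ?_, ?_⟩
    · rw [← Icc_union_Icc_eq_Icc i1 hk.le]
      exact i2.union_of_isClosed hc.continuousOn isClosed_Icc isClosed_Icc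
    · refine i3.trans ?_
      have hcc : ContinuousOn (derivWithin γ (Icc (t k) (t (k+1)))) (Icc (t k) (t (k+1))) :=
        hc.continuousOn_derivWithin (uniqueDiffOn_Icc hk) le_rfl
      have := hcc.intervalIntegrable_of_Icc (μ := volume) hk.le
      refine this.congr_uIoo ?_
      intro x hx
      rw [uIoo_of_le hk.le] at hx
      exact derivWithin_of_mem_nhds (Icc_mem_nhds hx.1 hx.2)
    · rintro x ⟨hx, hx'⟩
      rcases lt_trichotomy x (t k) with h | h | h
      · exact i4 x ⟨⟨hx.1, h⟩, hx'⟩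
      · exact absurd ⟨k, h.symm⟩ hx'
      · exact hd x ⟨h, hx.2⟩

theorem evar_le {E : Type*} [NormedAddCommGroup E] [NormedSpace ℝ E] [CompleteSpace E] (γ : ℝ → E) (t : ℕ → ℝ) (n : ℕ)
   (h1 : ∀ i < n, t i < t (i + 1)) (h2 : ∀ i < n, ContDiffOn ℝ 1 γ (Set.Icc (t i) (t (i + 1)))) :
   eVariationOn γ (Icc (t 0) (t n)) ≤ ENNReal.ofReal (∫ x in (t 0)..(t n), ‖deriv γ x‖) := by
  obtain ⟨i1, i2, i3, i4⟩ := pw_facts γ t n h1 h2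
  set φ : ℝ → ℝ := fun y => ∫ x in (t 0)..y, ‖deriv γ x‖ with hφ
  have key : ∀ x y, t 0 ≤ x → x ≤ y → y ≤ t n → ‖γ y - γ x‖ ≤ φ y - φ x := by
    intro x y hx hxy hy
    have hi : ∀ u v, t 0 ≤ u → u ≤ v → v ≤ t n → IntervalIntegrable (deriv γ) volume u v := by
      intro u v hu huv hv
      apply i3.mono_set
      rw [uIcc_of_le huv, uIcc_of_le i1]
      exact Icc_subset_Icc hu hv
    have e1 : φ y - φ x = ∫ z in x..y, ‖deriv γ z‖ := by
      rw [hφ]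
      exact intervalIntegral.integral_interval_sub_left (hi _ _ le_rfl (hx.trans hxy) hy).norm (hi _ _ le_rfl hx (hxy.trans hy)).norm
    have e2 : ∫ z in x..y, deriv γ z = γ y - γ x := by
      refine MeasureTheory.integral_eq_of_hasDerivAt_off_countable γ (deriv γ) (countable_range t) ?_ ?_ (hi x y hx hxy hy)
      · rw [uIcc_of_le hxy]; exact i2.mono (Icc_subset_Icc hx hy)
      · rintro z ⟨hz, hz'⟩
        rw [min_eq_left hxy, max_eq_right hxy] at hz
        exact i4 z ⟨⟨hx.trans_lt hz.1, hz.2.trans_le hy⟩, hz'⟩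
    rw [e1, ← e2]
    exact intervalIntegral.norm_integral_le_integral_norm hxy
  have hmono : MonotoneOn φ (Icc (t 0) (t n)) := by
    intro x hx y hy hxy
    have := key x y hx.1 hxy hy.2
    have := norm_nonneg (γ y - γ x)
    linarith
  have h3 : eVariationOn γ (Icc (t 0) (t n)) ≤ eVariationOn φ (Icc (t 0) (t n)) := by
    unfold eVariationOn
    refine iSup_mono fun p => Finset.sum_le_sum fun i _ => ?_
    obtain ⟨m, u, hu, hu'⟩ := p
    have hle : u i ≤ u (i+1) := hu (Nat.le_succ i)
    simp only
    rw [edist_dist, edist_dist, dist_eq_norm, Real.dist_eq]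
    refine ENNReal.ofReal_le_ofReal ((key _ _ (hu' i).1 hle (hu' (i+1)).2).trans (le_abs_self _))
  refine h3.trans ?_
  have := hmono.eVariationOn_eq (left_mem_Icc.2 i1) (right_mem_Icc.2 i1)
  rw [inter_self] at this
  refine this.le.trans ?_
  simp [hφ]

theorem cs_norm_one_le {A : Type*} [CStarAlgebra A] : ‖(1:A)‖ ≤ 1 := by
  rcases subsingleton_or_nontrivial A with h | h
  · rw [Subsingleton.elim (1:A) 0]; simp
  · exact CStarRing.norm_one.le

/-- The algebraic heart: the Cayley-type interpolation between two symmetries. -/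
theorem cayley_alg {A : Type*} [CStarAlgebra A] (S R G : A) (c d : ℝ) (hcd : c + d = 1)
    (hS : star S = S) (hR : star R = R) (hS2 : S * S = 1) (hR2 : R * R = 1)
    (hG : (1 + d • (R * S - 1)) * G = 1) (hG' : G * (1 + d • (R * S - 1)) = 1) :
    star ((1 + c • (R * S - 1)) * G * S) = (1 + c • (R * S - 1)) * G * S ∧
    ((1 + c • (R * S - 1)) * G * S) * ((1 + c • (R * S - 1)) * G * S) = 1 := by
  have hd : d = 1 - c := by linarith
  set W := R * S with hW
  set V := S * R with hV
  have hWV : W * V = 1 := by rw [hW, hV]; calc R * S * (S * R) = R * (S * S) * R := by noncomm_ring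
    _ = 1 := by rw [hS2, mul_one, hR2]
  have hVW : V * W = 1 := by rw [hW, hV]; calc S * R * (R * S) = S * (R * R) * S := by noncomm_ring
    _ = 1 := by rw [hR2, mul_one, hS2]
  have hSW : S * W = V * S := by rw [hW, hV, mul_assoc]
  have hSV : S * V = W * S := by
    rw [hW, hV, ← mul_assoc, hS2, mul_assoc, hS2, one_mul, mul_one]
  have hsW : star W = V := by rw [hW, hV, star_mul, hS, hR]
  set M := 1 + c • (W - 1) with hM
  set N := 1 + d • (W - 1) with hN
  have hsM : star M = 1 + c • (V - 1) := by simp [hM, hsW]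
  have hsN : star N = 1 + d • (V - 1) := by simp [hN, hsW]
  have hMN : M * N = N * M := by
    rw [hM, hN]
    generalize W - 1 = X
    simp only [mul_add, add_mul, mul_one, one_mul, smul_mul_assoc, mul_smul_comm]
    module
  have hMG : M * G = G * M := by
    calc M * G = (G * N) * M * G := by rw [hG', one_mul]
      _ = G * (N * M) * G := by noncomm_ring
      _ = G * M * (N * G) := by rw [← hMN]; noncomm_ring
      _ = G * M := by rw [hG, mul_one]
  have hSM : S * star M = M * S := by
    rw [hsM, hM]
    simp only [mul_add, add_mul, mul_sub, sub_mul, mul_one, one_mul, smul_mul_assoc, mul_smul_comm, hSV]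
  have hSN : S * star N = N * S := by
    rw [hsN, hN]
    simp only [mul_add, add_mul, mul_sub, sub_mul, mul_one, one_mul, smul_mul_assoc, mul_smul_comm, hSV]
  have hsG : star N * star G = 1 := by rw [← star_mul, hG', star_one]
  have hsG' : star G * star N = 1 := by rw [← star_mul, hG, star_one]
  have hSG : S * star G = G * S := by
    calc S * star G = (G * N) * S * star G := by rw [hG', one_mul]
      _ = G * (N * S) * star G := by noncomm_ring
      _ = G * S * (star N * star G) := by rw [← hSN]; noncomm_ring
      _ = G * S := by rw [hsG, mul_one]
  have hNV : N * V = star M := by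
    rw [hsM, hN, hd]
    simp only [add_mul, sub_mul, one_mul, smul_mul_assoc, hWV]
    module
  have hVM : V * M = star N := by
    rw [hsN, hM, hd]
    simp only [mul_add, mul_sub, mul_one, mul_smul_comm, hVW]
    module
  have hMV : M * V = V * M := by
    rw [hM]
    simp only [mul_add, add_mul, mul_sub, sub_mul, mul_one, one_mul, smul_mul_assoc, mul_smul_comm, hVW, hWV]
  have hsT : star (M * G * S) = M * G * S := by
    rw [star_mul, star_mul, hS, ← mul_assoc, hSG, mul_assoc, hSM, ← mul_assoc, hMG]
  refine ⟨hsT, ?_⟩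
  have h1 : star (M * G * S) = S * star G * star M := by rw [star_mul, star_mul, hS, mul_assoc]
  have hc : star G * star M = star M * star G := by rw [← star_mul, ← star_mul, hMG]
  calc M * G * S * (M * G * S) = M * G * S * (S * star G * star M) := by rw [← h1, hsT]
    _ = M * G * (S * S) * (star G * star M) := by noncomm_ring
    _ = M * G * (star M * star G) := by rw [hS2, hc]; noncomm_ring
    _ = M * (G * N) * V * star G := by rw [← hNV]; noncomm_ring
    _ = V * M * star G := by rw [hG', mul_one, hMV]
    _ = 1 := by rw [hVM, hsG]

theorem seg {A : Type*} [CStarAlgebra A] (P Q : A) (hP : IsSelfAdjoint P ∧ P * P = P)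
    (hQ : IsSelfAdjoint Q ∧ Q * Q = Q) (hd : ‖P - Q‖ < 1) :
    ∃ σ : ℝ → A, σ 0 = P ∧ σ 1 = Q ∧ ContDiffOn ℝ 1 σ (Icc 0 1) ∧
      (∀ t ∈ Icc (0:ℝ) 1, IsSelfAdjoint (σ t) ∧ σ t * σ t = σ t) ∧
      ∀ t ∈ Ioo (0:ℝ) 1, ‖deriv σ t‖ ≤ (1 + ‖P - Q‖) * ‖P - Q‖ / (1 - ‖P - Q‖) ^ 2 := by
  set δ := ‖P - Q‖ with hδ
  have hδ0 : 0 ≤ δ := norm_nonneg _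
  obtain ⟨S, hS⟩ : ∃ S : A, S = (2:ℝ) • P - 1 := ⟨_, rfl⟩
  obtain ⟨R, hR⟩ : ∃ R : A, R = (2:ℝ) • Q - 1 := ⟨_, rfl⟩
  have hP1 : star P = P := hP.1
  have hQ1 : star Q = Q := hQ.1
  have hSs : star S = S := by simp [hS, hP1]
  have hRs : star R = R := by simp [hR, hQ1]
  have hS2 : S * S = 1 := by
    simp only [hS, mul_sub, sub_mul, mul_one, one_mul, smul_mul_assoc, mul_smul_comm, hP.2]
    module
  have hR2 : R * R = 1 := by
    simp only [hR, mul_sub, sub_mul, mul_one, one_mul, smul_mul_assoc, mul_smul_comm, hQ.2]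
    module
  have hSn : ‖S‖ ≤ 1 := by
    have h := CStarRing.norm_star_mul_self (x := S)
    rw [hSs, hS2] at h
    have := cs_norm_one_le (A := A)
    nlinarith [norm_nonneg S]
  obtain ⟨E, hE⟩ : ∃ E : A, E = R * S - 1 := ⟨_, rfl⟩
  have hEn : ‖E‖ ≤ 2 * δ := by
    have : E = ((2:ℝ) • (Q - P)) * S := by
      rw [hE, ← hS2, ← sub_mul, hR, hS]; congr 1; module
    rw [this]
    refine (norm_mul_le _ _).trans ?_
    rw [norm_smul, norm_sub_rev Q P, ← hδ, Real.norm_of_nonneg (by norm_num)]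
    nlinarith
  -- the resolvent
  let N : ℝ → A := fun t => 1 + ((1 - t) / 2) • E
  let M : ℝ → A := fun t => 1 + ((1 + t) / 2) • E
  have hF : ∀ t ∈ Icc (0:ℝ) 1, ‖((1 - t) / 2) • E‖ ≤ δ := by
    intro t ht
    rw [norm_smul, Real.norm_of_nonneg (by linarith [ht.2])]
    nlinarith [ht.1, ht.2, norm_nonneg E]
  have hu : ∀ t ∈ Icc (0:ℝ) 1, ∃ u : Aˣ, (u : A) = N t := by
    intro t ht
    have h := hF t ht
    have h' : ‖-(((1 - t) / 2) • E)‖ < 1 := by rw [norm_neg]; linarith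
    exact ⟨Units.oneSub _ h', by simp [N]⟩
  let G : ℝ → A := fun t => Ring.inverse (N t)
  have hNG : ∀ t ∈ Icc (0:ℝ) 1, N t * G t = 1 ∧ G t * N t = 1 := by
    intro t ht
    obtain ⟨u, hu⟩ := hu t ht
    simp only [G, ← hu, Ring.inverse_unit, Units.mul_inv, Units.inv_mul, and_self]
  have hGn : ∀ t ∈ Icc (0:ℝ) 1, ‖G t‖ ≤ 1 / (1 - δ) := by
    intro t ht
    have h1 : G t = 1 - ((1 - t) / 2) • E * G t := by
      have := (hNG t ht).1
      simp only [N, add_mul, one_mul] at this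
      rw [eq_sub_iff_add_eq]; exact this
    have h2 : ‖G t‖ ≤ 1 + δ * ‖G t‖ := by
      calc ‖G t‖ = ‖1 - ((1 - t) / 2) • E * G t‖ := by rw [← h1]
        _ ≤ ‖(1:A)‖ + ‖((1 - t) / 2) • E * G t‖ := norm_sub_le _ _
        _ ≤ 1 + δ * ‖G t‖ := by
          refine add_le_add cs_norm_one_le ((norm_mul_le _ _).trans ?_)
          gcongr
          exact hF t ht
    rw [le_div_iff₀ (by linarith)]
    linarith
  have hNder : ∀ t, HasDerivAt N (-(1/2 : ℝ) • E) t := by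
    intro t
    have : HasDerivAt (fun t : ℝ => (1 - t) / 2) (-(1/2)) t := by
      have := ((hasDerivAt_id t).const_sub 1).div_const 2
      rw [show (-(1/2) : ℝ) = -1 / 2 by norm_num]; exact this
    exact (this.smul_const E).const_add 1
  have hMder : ∀ t, HasDerivAt M ((1/2 : ℝ) • E) t := by
    intro t
    have : HasDerivAt (fun t : ℝ => (1 + t) / 2) (1/2) t := ((hasDerivAt_id t).const_add 1).div_const 2
    exact (this.smul_const E).const_add 1
  have hGder : ∀ t ∈ Icc (0:ℝ) 1, HasDerivAt G ((1/2 : ℝ) • (G t * E * G t)) t := by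
    intro t ht
    obtain ⟨u, hu⟩ := hu t ht
    have h1 := hasFDerivAt_ringInverse (𝕜 := ℝ) u
    rw [hu] at h1
    have h2 := h1.comp_hasDerivAt t (hNder t)
    have h3 : G t = ↑u⁻¹ := by simp only [G, ← hu, Ring.inverse_unit]
    rw [h3]
    refine h2.congr_deriv ?_
    simp [mul_assoc]
  let σ : ℝ → A := fun t => (1/2 : ℝ) • (1 + M t * G t * S)
  have hMc : ContDiff ℝ 1 M := by fun_prop
  have hNc : ContDiff ℝ 1 N := by fun_prop
  have hGc : ContDiffOn ℝ 1 G (Icc 0 1) := by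
    intro t ht
    obtain ⟨u, hu⟩ := hu t ht
    have h1 := contDiffAt_ringInverse ℝ (n := 1) u
    rw [hu] at h1
    exact (h1.comp t hNc.contDiffAt).contDiffWithinAt
  have hσc : ContDiffOn ℝ 1 σ (Icc 0 1) := by
    exact contDiffOn_const.smul (contDiffOn_const.add ((hMc.contDiffOn.mul hGc).mul contDiffOn_const))
  have hσ0 : σ 0 = P := by
    have : M 0 * G 0 = 1 := by
      have := (hNG 0 (by simp)).1
      simpa [M, N] using this
    simp only [σ, this, hS, one_mul]; module
  have hσ1 : σ 1 = Q := by
    have h1 : G 1 = 1 := by simp [G, N]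
    have h2 : M 1 = R * S := by simp [M, hE]
    simp only [σ]; rw [h1, h2, mul_one, mul_assoc, hS2, mul_one, hR]; module
  refine ⟨σ, hσ0, hσ1, hσc, ?_, ?_⟩
  · intro t ht
    have h := cayley_alg S R (G t) ((1+t)/2) ((1-t)/2) (by ring) hSs hRs hS2 hR2
      (by rw [← hE]; exact (hNG t ht).1) (by rw [← hE]; exact (hNG t ht).2)
    rw [← hE] at h
    change star (M t * G t * S) = M t * G t * S ∧ M t * G t * S * (M t * G t * S) = 1 at h
    constructor
    · change star (σ t) = σ t
      simp only [σ, star_smul, star_add, star_one, h.1]; simp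
    · simp only [σ]
      generalize M t * G t * S = T at h
      simp only [mul_add, add_mul, mul_one, one_mul, smul_mul_assoc, mul_smul_comm, smul_add, h.2]
      module
  · intro t ht'
    have ht : t ∈ Icc (0:ℝ) 1 := Ioo_subset_Icc_self ht'
    have h1 := ((((hMder t).mul (hGder t ht)).mul_const S).const_add 1).const_smul (1/2:ℝ)
    have h2 : deriv σ t = (1/2 : ℝ) • (((1/2 : ℝ) • E * G t + M t * ((1/2 : ℝ) • (G t * E * G t))) * S) := h1.deriv
    have hEN : E * N t = N t * E := by simp [N, mul_add, add_mul]
    have hEG : G t * E = E * G t := by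
      calc G t * E = G t * E * (N t * G t) := by rw [(hNG t ht).1, mul_one]
        _ = G t * (E * N t) * G t := by noncomm_ring
        _ = (G t * N t) * E * G t := by rw [hEN]; noncomm_ring
        _ = E * G t := by rw [(hNG t ht).2, one_mul]
    have h3 : deriv σ t = (1/4 : ℝ) • (((2:ℝ) • 1 + E) * (E * G t) * G t * S) := by
      have e1 : E * G t = N t * (E * G t) * G t := by
        rw [← hEG, ← mul_assoc, (hNG t ht).1, one_mul, hEG]
      have e2 : ((2:ℝ) • 1 + E) = N t + M t := by simp only [N, M]; module
      rw [h2, e2, hEG, smul_mul_assoc, mul_smul_comm, ← smul_add, smul_mul_assoc, smul_smul]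
      nth_rewrite 1 [e1]
      norm_num
      noncomm_ring
    rw [h3, norm_smul]
    have hg := hGn t ht
    have hg0 := norm_nonneg (G t)
    have n1 : ‖(2:ℝ) • (1:A) + E‖ ≤ 2 + 2 * δ := by
      refine (norm_add_le _ _).trans (add_le_add ?_ hEn)
      rw [norm_smul]
      have := cs_norm_one_le (A := A)
      norm_num
      linarith
    have hpos : 0 ≤ 1 / (1 - δ) := by apply div_nonneg <;> linarith
    have n2 : ‖((2:ℝ) • 1 + E) * (E * G t) * G t * S‖ ≤ (2 + 2 * δ) * (2 * δ * (1 / (1 - δ))) * (1 / (1 - δ)) * 1 := by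
      refine (norm_mul_le _ _).trans (mul_le_mul ?_ hSn (norm_nonneg _) (by positivity))
      refine (norm_mul_le _ _).trans (mul_le_mul ?_ hg hg0 (by positivity))
      refine (norm_mul_le _ _).trans (mul_le_mul n1 ?_ (norm_nonneg _) (by positivity))
      exact (norm_mul_le _ _).trans (mul_le_mul hEn hg hg0 (by positivity))
    have hne : 1 - δ ≠ 0 := by linarith
    calc ‖(1/4:ℝ)‖ * _ ≤ ‖(1/4:ℝ)‖ * _ := mul_le_mul_of_nonneg_left n2 (norm_nonneg _)
      _ = _ := by rw [Real.norm_of_nonneg (by norm_num)]; field_simp; ring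

/-- `Q` can be reached from `P` by a piecewise C¹ path of projections of length at most `L`. -/
def ProjReach {H : Type*} [NormedAddCommGroup H] [InnerProductSpace ℂ H]
    [CompleteSpace H] (P Q : H →L[ℂ] H) (L : ℝ) : Prop :=
  ∃ (a b : ℝ) (γ : ℝ → (H →L[ℂ] H)), PiecewiseC1On γ a b ∧
    (∀ t ∈ Set.Icc a b, IsOrthogonalProjection (γ t)) ∧ γ a = P ∧ γ b = Q ∧
    ∫ t in a..b, ‖deriv γ t‖ ≤ L

theorem projReach_step {H : Type*} [NormedAddCommGroup H] [InnerProductSpace ℂ H]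
    [CompleteSpace H] (P Q Q' : H →L[ℂ] H) (L C : ℝ) (h : ProjReach P Q L) (σ : ℝ → (H →L[ℂ] H))
    (hσ0 : σ 0 = Q) (hσ1 : σ 1 = Q') (hσ : ContDiffOn ℝ 1 σ (Icc 0 1))
    (hσp : ∀ t ∈ Icc (0:ℝ) 1, IsOrthogonalProjection (σ t))
    (hσd : ∀ t ∈ Ioo (0:ℝ) 1, ‖deriv σ t‖ ≤ C) : ProjReach P Q' (L + C) := by
  obtain ⟨a, b, γ, ⟨n, t, rfl, rfl, h1, h2⟩, hp, hγ0, hγ1, hL⟩ := h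
  obtain ⟨i1, -, i3, -⟩ := pw_facts γ t n h1 h2
  let τ : ℝ → (H →L[ℂ] H) := fun s => if s ≤ t n then γ s else σ (s - t n)
  have hτ1 : ∀ s ≤ t n, τ s = γ s := fun s hs => by simp only [τ, if_pos hs]
  have hτ2 : ∀ s, t n ≤ s → τ s = σ (s - t n) := by
    intro s hs
    rcases hs.eq_or_lt with h | h
    · rw [← h, hτ1 _ le_rfl, sub_self, hσ0, hγ1]
    · simp only [τ, if_neg (not_le.2 h)]
  let u : ℕ → ℝ := fun i => if i ≤ n then t i else t n + 1
  have hu : ∀ i ≤ n, u i = t i := fun i hi => by simp only [u, if_pos hi]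
  have hu' : u (n + 1) = t n + 1 := by simp [u]
  have htm : ∀ i ≤ n, t i ≤ t n := by
    intro i hi
    obtain ⟨k, rfl⟩ := Nat.exists_eq_add_of_le hi
    clear * - h1
    induction k with
    | zero => simp
    | succ k ih => exact (ih (fun j hj => h1 j (by omega))).trans (h1 (i + k) (by omega)).le
  have hu1 : ∀ i < n + 1, u i < u (i + 1) := by
    intro i hi
    rcases Nat.lt_succ_iff_lt_or_eq.1 hi with h | rfl
    · rw [hu i h.le, hu (i+1) h]; exact h1 i h
    · rw [hu _ le_rfl, hu']; linarith
  have hu2 : ∀ i < n + 1, ContDiffOn ℝ 1 τ (Icc (u i) (u (i + 1))) := by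
    intro i hi
    rcases Nat.lt_succ_iff_lt_or_eq.1 hi with h | rfl
    · rw [hu i h.le, hu (i+1) h]
      exact (h2 i h).congr fun s hs => hτ1 s (hs.2.trans (htm _ h))
    · rw [hu _ le_rfl, hu']
      have hm : MapsTo (fun s => s - t i) (Icc (t i) (t i + 1)) (Icc 0 1) := by
        intro s hs
        exact ⟨by linarith [hs.1], by linarith [hs.2]⟩
      have := hσ.comp (s := Icc (t i) (t i + 1)) (f := fun s => s - t i) (by fun_prop) hm
      exact this.congr fun s hs => hτ2 s hs.1
  obtain ⟨-, -, j3, -⟩ := pw_facts τ u (n + 1) hu1 hu2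
  rw [hu 0 (Nat.zero_le _), hu'] at j3
  refine ⟨t 0, t n + 1, τ, ⟨n + 1, u, hu 0 (Nat.zero_le _), hu', hu1, hu2⟩, ?_, ?_, ?_, ?_⟩
  · intro s hs
    rcases le_total s (t n) with h | h
    · rw [hτ1 s h]; exact hp s ⟨hs.1, h⟩
    · rw [hτ2 s h]; exact hσp _ ⟨by linarith, by linarith [hs.2]⟩
  · rw [hτ1 _ i1, hγ0]
  · rw [hτ2 _ (by linarith), add_sub_cancel_left, hσ1]
  · have k1 : IntervalIntegrable (deriv τ) volume (t 0) (t n) := by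
      apply j3.mono_set
      rw [uIcc_of_le i1, uIcc_of_le (by linarith)]
      exact Icc_subset_Icc_right (by linarith)
    have k2 : IntervalIntegrable (deriv τ) volume (t n) (t n + 1) := by
      apply j3.mono_set
      rw [uIcc_of_le (by linarith), uIcc_of_le (by linarith)]
      exact Icc_subset_Icc_left (by linarith)
    rw [← intervalIntegral.integral_add_adjacent_intervals k1.norm k2.norm]
    have e1 : ∫ s in (t 0)..(t n), ‖deriv τ s‖ = ∫ s in (t 0)..(t n), ‖deriv γ s‖ := by
      refine intervalIntegral.integral_congr_Ioo_of_le i1 fun s hs => ?_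
      have : τ =ᶠ[nhds s] γ := by
        filter_upwards [Iio_mem_nhds hs.2] with x hx using hτ1 x (le_of_lt hx)
      simp only [this.deriv_eq]
    have e2 : ∀ s ∈ Ioo (t n) (t n + 1), ‖deriv τ s‖ ≤ C := by
      intro s hs
      have : τ =ᶠ[nhds s] fun x => σ (x - t n) := by
        filter_upwards [Ioi_mem_nhds hs.1] with x hx using hτ2 x (le_of_lt hx)
      rw [this.deriv_eq, deriv_comp_sub_const]
      exact hσd _ ⟨by linarith [hs.1], by linarith [hs.2]⟩
    have e3 : ∫ s in (t n)..(t n + 1), ‖deriv τ s‖ ≤ C := by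
      calc _ ≤ ∫ s in (t n)..(t n + 1), C :=
            intervalIntegral.integral_mono_on_of_le_Ioo (by linarith) k2.norm (by simp) e2
        _ = C := by simp
    rw [e1]
    linarith

theorem projReach_of_path {H : Type*} [NormedAddCommGroup H] [InnerProductSpace ℂ H]
    [CompleteSpace H] (γ : ℝ → (H →L[ℂ] H)) (hγ : ContinuousOn γ (Icc (0:ℝ) 1))
    (hp : ∀ t ∈ Icc (0:ℝ) 1, IsOrthogonalProjection (γ t))
    (hv : eVariationOn γ (Icc (0:ℝ) 1) ≠ ⊤) (ε : ℝ) (hε : 0 < ε) :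
    ProjReach (γ 0) (γ 1) ((1 + ε) * (eVariationOn γ (Icc (0:ℝ) 1)).toReal) := by
  obtain ⟨η, hη0, hη1, hη⟩ : ∃ η : ℝ, 0 < η ∧ η ≤ 1 ∧ ∀ d, 0 ≤ d → d < η →
      (1 + d) * d / (1 - d) ^ 2 ≤ (1 + ε) * d := by
    have hc : ContinuousAt (fun d : ℝ => (1 + d) / (1 - d) ^ 2) 0 := by
      apply ContinuousAt.div
      · fun_prop
      · fun_prop
      · norm_num
    have h0 : (fun d : ℝ => (1 + d) / (1 - d) ^ 2) 0 < 1 + ε := by norm_num; exact hε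
    obtain ⟨r, hr, hr'⟩ := Metric.eventually_nhds_iff.1 (hc.eventually_lt_const h0)
    refine ⟨min r 1, by positivity, min_le_right _ _, fun d hd hd' => ?_⟩
    have := hr' (y := d) (by
      rw [Real.dist_eq, sub_zero, abs_of_nonneg hd]; exact hd'.trans_le (min_le_left _ _))
    have := mul_le_mul_of_nonneg_right this.le hd
    calc _ = (1 + d) / (1 - d) ^ 2 * d := by ring
      _ ≤ _ := this
  have huc := isCompact_Icc.uniformContinuousOn_of_continuous hγ
  obtain ⟨δ, hδ, hδ'⟩ := Metric.uniformContinuousOn_iff.1 huc η hη0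
  obtain ⟨n, hn⟩ := exists_nat_one_div_lt hδ
  have hn0 : (0:ℝ) < n + 1 := by positivity
  let u : ℕ → ℝ := fun i => i / (n + 1)
  have hum : Monotone u := by
    intro i j hij
    simp only [u]
    gcongr
  have hu : ∀ i ≤ n + 1, u i ∈ Icc (0:ℝ) 1 := by
    intro i hi
    refine ⟨by positivity, ?_⟩
    simp only [u]
    rw [div_le_one hn0]
    exact_mod_cast hi
  have key : ∀ i ≤ n + 1, ProjReach (γ 0) (γ (u i))
      (∑ j ∈ Finset.range i, (1 + ε) * ‖γ (u (j + 1)) - γ (u j)‖) := by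
    intro i
    induction i with
    | zero =>
      intro _
      refine ⟨0, 0, γ, ⟨0, fun _ => 0, rfl, rfl, by simp, by simp⟩, ?_, rfl, by simp [u], by simp⟩
      intro t ht
      exact hp t (Icc_subset_Icc_right zero_le_one ht)
    | succ k ih =>
      intro hk
      rw [Finset.sum_range_succ]
      have d1 : ‖γ (u k) - γ (u (k + 1))‖ < η := by
        rw [← dist_eq_norm]
        refine hδ' _ (hu k (by omega)) _ (hu (k + 1) hk) ?_
        rw [dist_comm, Real.dist_eq]
        have : u (k + 1) - u k = 1 / (n + 1) := by simp only [u]; push_cast; ring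
        rw [this, abs_of_pos (by positivity)]
        exact hn
      obtain ⟨σ, s0, s1, s2, s3, s4⟩ := seg (γ (u k)) (γ (u (k + 1))) (hp _ (hu k (by omega)))
        (hp _ (hu (k + 1) hk)) (d1.trans_le hη1)
      refine projReach_step _ _ _ _ _ (ih (by omega)) σ s0 s1 s2 s3 fun t ht => (s4 t ht).trans ?_
      rw [norm_sub_rev (γ (u (k + 1)))]
      exact hη _ (norm_nonneg _) d1
  have hfin := key (n + 1) le_rfl
  have hu1 : u (n + 1) = 1 := by
    simp only [u]; push_cast; exact div_self hn0.ne'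
  rw [hu1, ← Finset.mul_sum] at hfin
  have hs : ∑ j ∈ Finset.range (n + 1), ‖γ (u (j + 1)) - γ (u j)‖
      ≤ (eVariationOn γ (Icc (0:ℝ) 1)).toReal := by
    have := eVariationOn.sum_le_of_monotoneOn_Iic (f := γ) (s := Icc (0:ℝ) 1) (n := n + 1) (u := u)
      (hum.monotoneOn _) hu
    have := ENNReal.toReal_mono hv this
    refine le_trans (le_of_eq ?_) this
    rw [ENNReal.toReal_sum (fun _ _ => edist_ne_top _ _)]
    refine Finset.sum_congr rfl fun j _ => ?_
    rw [edist_dist, ENNReal.toReal_ofReal dist_nonneg, dist_eq_norm]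
  obtain ⟨a, b, γ', q1, q2, q3, q4, q5⟩ := hfin
  exact ⟨a, b, γ', q1, q2, q3, q4, q5.trans (by gcongr)⟩

end Helpers

open MeasureTheory Set

/-- The length metric `ρ` coincides with the Riemannian pseudometric: the
infimum of `∫_a^b ‖γ'(t)‖ dt` over all piecewise `C¹`-smooth paths `γ : [a,b] → 𝒫` joining
`P` to `Q` (the infimum of the empty set being `∞`). -/
theorem projLengthMetric_eq_riemannian {H : Type*} [NormedAddCommGroup H]
    [InnerProductSpace ℂ H] [CompleteSpace H] [TopologicalSpace.SeparableSpace H]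
    (P Q : H →L[ℂ] H)
    (hP : IsOrthogonalProjection P) (hQ : IsOrthogonalProjection Q) :
    projLengthMetric P Q =
      ⨅ (a : ℝ) (b : ℝ) (γ : ℝ → (H →L[ℂ] H)) (_ : PiecewiseC1On γ a b)
        (_ : ∀ t ∈ Set.Icc a b, IsOrthogonalProjection (γ t))
        (_ : γ a = P) (_ : γ b = Q),
        ENNReal.ofReal (∫ t in a..b, ‖deriv γ t‖) := by
  apply le_antisymm
  · refine le_iInf fun a => le_iInf fun b => le_iInf fun γ => le_iInf fun hc => le_iInf fun hp =>
      le_iInf fun h0 => le_iInf fun h1 => ?_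
    obtain ⟨n, t, rfl, rfl, ht, hc⟩ := hc
    obtain ⟨i1, i2, -, -⟩ := pw_facts γ t n ht hc
    let φ : ℝ → ℝ := fun s => t 0 + (t n - t 0) * s
    have hφ : MapsTo φ (Icc 0 1) (Icc (t 0) (t n)) := by
      intro s hs
      constructor
      · simp only [φ]; nlinarith [hs.1, hs.2]
      · simp only [φ]; nlinarith [hs.1, hs.2]
    have hφm : MonotoneOn φ (Icc 0 1) := by
      intro x _ y _ hxy
      simp only [φ]
      nlinarith
    have hφc : Continuous φ := by fun_prop
    refine le_trans ?_ ((eVariationOn.comp_le_of_monotoneOn γ φ hφm hφ).trans (evar_le γ t n ht hc))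
    unfold projLengthMetric
    refine iInf_le_of_le (γ ∘ φ) (iInf_le_of_le (i2.comp hφc.continuousOn hφ)
      (iInf_le_of_le (fun s hs => hp _ (hφ hs)) (iInf_le_of_le ?_ (iInf_le_of_le ?_ le_rfl))))
    · simp [φ, h0]
    · simp [φ, h1]
  · unfold projLengthMetric
    refine le_iInf fun γ => le_iInf fun hc => le_iInf fun hp =>
      le_iInf fun h0 => le_iInf fun h1 => ?_
    by_cases hv : eVariationOn γ (Icc (0:ℝ) 1) = ⊤
    · rw [hv]; exact le_top
    refine ENNReal.le_of_forall_pos_le_add fun ε hε _ => ?_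
    set v := (eVariationOn γ (Icc (0:ℝ) 1)).toReal with hvdef
    have hv0 : 0 ≤ v := ENNReal.toReal_nonneg
    have hε' : (0:ℝ) < ε := hε
    obtain ⟨a, b, γ', q1, q2, q3, q4, q5⟩ :=
      projReach_of_path γ hc hp hv (ε / (v + 1)) (by positivity)
    rw [h0] at q3
    rw [h1] at q4
    refine iInf_le_of_le a (iInf_le_of_le b (iInf_le_of_le γ' (iInf_le_of_le q1
      (iInf_le_of_le q2 (iInf_le_of_le q3 (iInf_le_of_le q4 ?_))))))
    have hle : (1 + ε / (v + 1)) * v ≤ v + ε := by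
      have : (ε:ℝ) / (v + 1) * v ≤ ε := by
        rw [div_mul_eq_mul_div, div_le_iff₀ (by positivity)]
        nlinarith
      linarith
    calc _ ≤ ENNReal.ofReal (v + ε) := ENNReal.ofReal_le_ofReal (q5.trans hle)
      _ = _ := by
        rw [ENNReal.ofReal_add hv0 hε'.le, hvdef, ENNReal.ofReal_toReal hv, ENNReal.ofReal_coe_nnreal]
end
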